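/- Let p be a prime, Φ : ℤ_p → ℤ_p a non-constant map with Φ(A) = Φ(−A) for all A ∈ ℤ_p, and α ∈ ℤ_p ∖ {0} with Φ(αA) = αΦ(A) for all A ∈ ℤ_p. Then the operation (a,x)·(b,y) = (αb + αx, αy + αΦ(b−a)) on ℤ_p × ℤ_p defines an indecomposable irretractable cycle set. Moreover, two such cycle sets with parameters (α,Φ) and (α′,Φ′) are isomorphic if and only if α = α′ and there exists β ∈ ℤ_p ∖ {0} with β⁻¹·Φ(βA) = Φ′(A) for all A ∈ ℤ_p. Conversely, every irretractable indecomposable cycle set of size p² is isomorphic to one of this form. -/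

import Mathlib

/-- A (non-degenerate) cycle set: a set with a binary operation satisfying
(C1) `(x·y)·(x·z) = (y·x)·(y·z)`, (C2) each left translation is bijective and
(C3) the square map `x ↦ x·x` is bijective. -/
structure CycleSet (X : Type*) where
  op : X → X → X
  c1 : ∀ x y z : X, op (op x y) (op x z) = op (op y x) (op y z)
  c2 : ∀ x : X, Function.Bijective (op x)
  c3 : Function.Bijective (fun x : X => op x x)

namespace CycleSet

variable {X Y : Type*}

/-- The permutation `σ_x : y ↦ x·y`. -/
noncomputable def sigma (C : CycleSet X) (x : X) : Equiv.Perm X :=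
  Equiv.ofBijective (C.op x) (C.c2 x)

/-- The permutation group `𝒢(X)` generated by all `σ_x`. -/
noncomputable def permGroup (C : CycleSet X) : Subgroup (Equiv.Perm X) :=
  Subgroup.closure (Set.range C.sigma)

/-- A cycle set is indecomposable if `𝒢(X)` acts transitively on `X`. -/
def Indecomposable (C : CycleSet X) : Prop :=
  ∀ x y : X, ∃ g ∈ C.permGroup, g x = y

/-- A cycle set is irretractable if `σ_x = σ_y` implies `x = y`. -/
def Irretractable (C : CycleSet X) : Prop :=
  ∀ x y : X, C.op x = C.op y → x = y

/-- `f` is an isomorphism of cycle sets from `C` to `D`. -/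
def IsIso (C : CycleSet X) (D : CycleSet Y) (f : X → Y) : Prop :=
  Function.Bijective f ∧ ∀ x y : X, f (C.op x y) = D.op (f x) (f y)

/-- Two cycle sets are isomorphic if there is an isomorphism between them. -/
def Iso (C : CycleSet X) (D : CycleSet Y) : Prop :=
  ∃ f : X → Y, C.IsIso D f

end CycleSet

/-!
The permutation group `𝒢(X)` of a finite cycle set is a left brace: it is in bijection with an
additive group `A` on which it acts, and an irretractable `X` embeds in `A` as a cycle base. When
`|X| = p²`, the `p`-primary part of this brace is a brace of `p`-power order for which the
projection of `X` is still injective. A central element of order `p`, together with an element of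
`A` fixed by that part, gives coordinates `ℤ_p × ℤ_p` on `X`. Comparing degrees with respect to
the difference operator then shows that the projected cycle set has the required form with `α = 1`.

When `p` is odd, the group of elements of order prime to `p` acts faithfully by nonzero scalars on
the fixed direction, so its order is less than `p`; since `X` is a single orbit of `p`-power size,
its projection to the complement of the `p`-primary part is then a single element `q`. When
`p = 2`, the embedding `𝒢(X) ≤ S₄` bounds this order by `3`, and a group of order `3` cannot act
nontrivially on a two-element image with two-element fibres, so again there is only one `q`. It acts
as an automorphism of the cycle set with `α = 1`. Isomorphisms between parametrised cycle sets
preserve horizontal translations and are therefore affine, so `q` acts as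
`(a, x) ↦ (μ a + c, μ x)`, and twisting by it turns the parameter `α = 1` into `α = μ`.
-/

section ZModFunctions

variable {p : ℕ} [Fact p.Prime]

theorem eq_of_periodic_zmod {β : Type*} {f : ZMod p → β} {c : ZMod p}
    (hf : Function.Periodic f c) (hc : c ≠ 0) (x y : ZMod p) : f x = f y := by
  have h := hf.nat_mul ((y - x) / c).val x
  rw [ZMod.natCast_zmod_val, div_mul_cancel₀ _ hc, add_sub_cancel] at h
  exact h.symm

theorem eq_add_div_mul_of_add_eq {f : ZMod p → ZMod p} {c d : ZMod p} (hc : c ≠ 0)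
    (hf : ∀ x, f (x + c) = f x + d) (x : ZMod p) : f x = f 0 + d / c * x := by
  have hper : Function.Periodic (fun x => f x - d / c * x) c := fun x => by
    simp only [hf]
    field_simp
    ring
  linear_combination eq_of_periodic_zmod hper hc x 0

end ZModFunctions

section DifferenceOperator

variable {p : ℕ}

/-- The translation operator `f ↦ f (· + c)` on functions `ZMod p → ZMod p`. -/
def zmodTranslation (c : ZMod p) : Module.End (ZMod p) (ZMod p → ZMod p) :=
  LinearMap.funLeft (ZMod p) (ZMod p) (· + c)

/-- The difference operator `f ↦ f (· + 1) - f`. The degree of a function `ZMod p → ZMod p` is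
measured by the power of this operator that annihilates it. -/
def zmodDiff (p : ℕ) : Module.End (ZMod p) (ZMod p → ZMod p) :=
  zmodTranslation 1 - 1

@[simp]
theorem zmodTranslation_apply (c : ZMod p) (f : ZMod p → ZMod p) (x : ZMod p) :
    zmodTranslation c f x = f (x + c) := rfl

theorem zmodTranslation_natCast (k : ℕ) :
    zmodTranslation (k : ZMod p) = zmodTranslation 1 ^ k := by
  induction k with
  | zero => ext; simp
  | succ k ih =>
    rw [pow_succ', ← ih]
    ext f x
    simp only [zmodTranslation_apply, Module.End.mul_apply]
    congr 1
    push_cast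
    ring

theorem commute_zmodDiff_zmodTranslation (c : ZMod p) :
    Commute (zmodDiff p) (zmodTranslation c) := by
  refine Commute.sub_left (LinearMap.ext fun f => funext fun x => ?_) (Commute.one_left _)
  simp only [Module.End.mul_apply, zmodTranslation_apply]
  rw [add_right_comm]

theorem zmodDiff_pow_self [Fact p.Prime] : zmodDiff p ^ p = 0 := by
  have : CharP (Module.End (ZMod p) (ZMod p → ZMod p)) p :=
    charP_of_injective_algebraMap (algebraMap (ZMod p) _).injective p
  rw [zmodDiff, sub_pow_char_of_commute _ (Commute.one_right _), ← zmodTranslation_natCast,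
    one_pow, sub_eq_zero]
  ext
  simp

theorem exists_zmodTranslation_sub_one_eq [NeZero p] (c : ZMod p) :
    ∃ T, zmodTranslation c - 1 = c • zmodDiff p + T * zmodDiff p ^ 2 := by
  suffices h : ∀ k : ℕ, ∃ T,
      zmodTranslation 1 ^ k - 1 = (k : ZMod p) • zmodDiff p + T * zmodDiff p ^ 2 by
    simpa only [← zmodTranslation_natCast, ZMod.natCast_zmod_val] using h c.val
  intro k
  induction k with
  | zero => exact ⟨0, by simp⟩
  | succ k ih =>
    obtain ⟨T, hT⟩ := ih
    refine ⟨(k : ZMod p) • 1 + T * zmodDiff p + T, ?_⟩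
    calc zmodTranslation (1 : ZMod p) ^ (k + 1) - 1
        = (zmodTranslation 1 ^ k - 1) * zmodDiff p + zmodDiff p + (zmodTranslation 1 ^ k - 1) := by
          rw [zmodDiff, pow_succ, mul_sub, sub_mul, one_mul, mul_one]
          abel
      _ = _ := by
          rw [hT, Nat.cast_succ]
          simp only [add_mul, smul_mul_assoc, one_mul, add_smul, one_smul, pow_two, mul_assoc]
          abel

theorem zmodDiff_pow_zmodTranslation_sub_one [NeZero p] (c : ZMod p) (e : ℕ)
    {f : ZMod p → ZMod p} (hf : (zmodDiff p ^ (e + 2)) f = 0) :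
    (zmodDiff p ^ e) ((zmodTranslation c - 1) f) = c • (zmodDiff p ^ (e + 1)) f := by
  obtain ⟨T, hT⟩ := exists_zmodTranslation_sub_one_eq c
  have hcomm : Commute (zmodDiff p ^ e) (zmodTranslation c - 1) :=
    ((commute_zmodDiff_zmodTranslation c).sub_right (Commute.one_right _)).pow_left e
  rw [← Module.End.mul_apply, hcomm.eq, hT, add_mul, mul_assoc, ← pow_add, smul_mul_assoc,
    ← pow_succ', add_comm 2, LinearMap.add_apply, Module.End.mul_apply T, hf, map_zero, add_zero,
    LinearMap.smul_apply]

theorem eq_of_zmodDiff_eq_zero [NeZero p] {f : ZMod p → ZMod p} (hf : zmodDiff p f = 0)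
    (x y : ZMod p) : f x = f y := by
  have h := congrFun (zmodDiff_pow_zmodTranslation_sub_one (y - x) 0 (f := f)
    (by rw [pow_succ, Module.End.mul_apply, hf, map_zero])) x
  rw [zero_add, pow_one, hf] at h
  simpa [sub_eq_zero, eq_comm] using h

variable {G : ZMod p → ZMod p → ZMod p}

theorem exists_smul_eq_sum_of_shift_identity [NeZero p]
    (hG : ∀ x y A B, G (y + G x (A - B)) B + G x A = G (x + G y (B - A)) A + G y B)
    {e : ℕ} {B : ZMod p} (hB : (zmodDiff p ^ (e + 2)) (G · B) = 0) (x₀ k : ZMod p) :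
    ∃ c : ZMod p → ZMod p, (zmodDiff p ^ (e + 1)) (G · B) x₀ • (G · k) =
      ∑ y, c y • (zmodTranslation (G y (-k)) - 1) (G · (k + B)) := by
  let Λ : (ZMod p → ZMod p) →ₗ[ZMod p] ZMod p := LinearMap.proj x₀ ∘ₗ (zmodDiff p ^ e)
  refine ⟨fun y => Λ fun j => if y = j then 1 else 0, funext fun x => ?_⟩
  have hΛ : Λ ((zmodTranslation (G x k) - 1) (G · B)) =
      G x k * (zmodDiff p ^ (e + 1)) (G · B) x₀ :=
    congrFun (zmodDiff_pow_zmodTranslation_sub_one (G x k) e hB) x₀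
  have hswap : (zmodTranslation (G x k) - 1) (G · B) =
      fun y => G (x + G y (-k)) (k + B) - G x (k + B) := funext fun y => by
    have h := hG x y (k + B) B
    rw [add_sub_cancel_right, show B - (k + B) = -k by ring] at h
    simp only [LinearMap.sub_apply, Pi.sub_apply, zmodTranslation_apply, Module.End.one_apply]
    linear_combination h
  rw [hswap, LinearMap.pi_apply_eq_sum_univ] at hΛ
  simp only [Finset.sum_apply, Pi.smul_apply, smul_eq_mul, LinearMap.sub_apply, Pi.sub_apply,
    zmodTranslation_apply, Module.End.one_apply] at hΛ ⊢
  rw [mul_comm, ← hΛ]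
  exact Finset.sum_congr rfl fun y _ => mul_comm _ _

/-- Comparing degrees in the first variable: the left-hand side of
`exists_smul_eq_sum_of_shift_identity` would keep the maximal degree, its right-hand side does
not. -/
theorem apply_eq_of_shift_identity [Fact p.Prime]
    (hG : ∀ x y A B, G (y + G x (A - B)) B + G x A = G (x + G y (B - A)) A + G y B)
    (x y k : ZMod p) : G x k = G y k := by
  classical
  have hnil : ∃ n : ℕ, ∀ k, (zmodDiff p ^ n) (G · k) = 0 :=
    ⟨p, fun k => by rw [zmodDiff_pow_self, LinearMap.zero_apply]⟩
  rcases hn : Nat.find hnil with - | - | e <;> have hvan := Nat.find_spec hnil <;>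
    rw [hn] at hvan
  · exact (congrFun (hvan k) x).trans (congrFun (hvan k) y).symm
  · exact eq_of_zmodDiff_eq_zero (by simpa using hvan k) x y
  have hmin : ¬∀ k, (zmodDiff p ^ (e + 1)) (G · k) = 0 := Nat.find_min hnil (by lia)
  push Not at hmin
  obtain ⟨B, hB⟩ := hmin
  obtain ⟨x₀, hx₀⟩ := Function.ne_iff.mp hB
  refine absurd (?_ : (zmodDiff p ^ (e + 1)) (G · B) = 0) hB
  obtain ⟨c, hc⟩ := exists_smul_eq_sum_of_shift_identity hG (hvan B) x₀ B
  have h := congrArg (zmodDiff p ^ (e + 1)) hc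
  rw [map_smul, map_sum, Finset.sum_eq_zero] at h
  · exact (smul_eq_zero.mp h).resolve_left hx₀
  · intro y _
    rw [map_smul, zmodDiff_pow_zmodTranslation_sub_one _ _
      (by rw [pow_succ', Module.End.mul_apply, hvan, map_zero]), hvan, smul_zero, smul_zero]

end DifferenceOperator

section EvenFunctions

variable {p : ℕ} [Fact p.Prime]

theorem eq_zero_of_forall_exists_eq_sub (hp : p ≠ 2) {Φ w : ZMod p → ZMod p}
    (heven : ∀ t, Φ (-t) = Φ t) (h : ∀ a, ∃ a', ∀ b, w b = Φ (b - a') - Φ (b - a))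
    (a : ZMod p) : w a = 0 := by
  have hsymm : ∀ s t, Φ (s - t) = Φ (t - s) := fun s t => by rw [← heven, neg_sub]
  have hanti : ∀ {v : ZMod p → ZMod p} {s t : ZMod p},
      (∀ b, v b = Φ (b - t) - Φ (b - s)) → v t = -v s := fun {v s t} hv => by
    rw [hv t, hv s, hsymm s t]
    simp
  obtain ⟨a', ha'⟩ := h a
  obtain ⟨a'', ha''⟩ := h a'
  have hdouble : (2 : ZMod p) * w a'' = -(2 * w a) :=
    hanti (v := fun b => 2 * w b) fun b => by linear_combination ha' b + ha'' b
  have hfour : (2 : ZMod p) * (2 * w a) = 0 := by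
    rw [hanti ha'', hanti ha'] at hdouble
    linear_combination hdouble
  have h2 : (2 : ZMod p) ≠ 0 := Ring.two_ne_zero (by rwa [ZMod.ringChar_zmod_n])
  exact (mul_eq_zero.mp ((mul_eq_zero.mp hfour).resolve_left h2)).resolve_left h2

end EvenFunctions

namespace CycleSet

section Basic

variable {X : Type*} {C : CycleSet X}

theorem sigma_mem_permGroup (C : CycleSet X) (x : X) : C.sigma x ∈ C.permGroup :=
  Subgroup.subset_closure ⟨x, rfl⟩

theorem indecomposable_of_forall_invariant
    (h : ∀ c : X → Set X, (∀ u v, c (C.op u v) = c v) → ∀ v w, c v = c w) :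
    C.Indecomposable := by
  intro x y
  have horbit : MulAction.orbit C.permGroup y = MulAction.orbit C.permGroup x :=
    h _ (fun u v => MulAction.orbit_eq_iff.mpr ⟨⟨C.sigma u, C.sigma_mem_permGroup u⟩, rfl⟩) y x
  obtain ⟨⟨g, hg⟩, hgx⟩ := MulAction.orbit_eq_iff.mp horbit
  exact ⟨g, hg, hgx⟩

theorem eq_of_op_eq {D : CycleSet X} (h : C.op = D.op) : C = D := by
  cases C
  cases D
  congr

end Basic

section Params

variable {p : ℕ} {Φ : ZMod p → ZMod p} {α : ZMod p}

/-- The conditions on the parameters `Φ` and `α` under which they define a cycle set on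
`ZMod p × ZMod p`. -/
structure IsAdmissible (Φ : ZMod p → ZMod p) (α : ZMod p) : Prop where
  nonconst : ∃ i j, Φ i ≠ Φ j
  even : ∀ t, Φ (-t) = Φ t
  ne_zero : α ≠ 0
  map_mul : ∀ t, Φ (α * t) = α * Φ t

variable [Fact p.Prime]

/-- The cycle set on `ZMod p × ZMod p` with parameters `Φ` and `α`. -/
def ofParams (h : IsAdmissible Φ α) : CycleSet (ZMod p × ZMod p) where
  op u v := (α * v.1 + α * u.2, α * v.2 + α * Φ (v.1 - u.1))
  c1 := by
    rintro ⟨a, x⟩ ⟨b, y⟩ ⟨c, z⟩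
    have hsymm : Φ (a - b) = Φ (b - a) := by rw [← h.even, neg_sub]
    have h₁ : α * c + α * x - (α * b + α * x) = α * (c - b) := by ring
    have h₂ : α * c + α * y - (α * a + α * y) = α * (c - a) := by ring
    simp only [h₁, h₂, h.map_mul, hsymm, Prod.mk.injEq]
    constructor <;> ring
  c2 := by
    rintro ⟨a, x⟩
    refine Finite.injective_iff_bijective.mp ?_
    rintro ⟨b, y⟩ ⟨c, z⟩ hbc
    obtain ⟨h₁, h₂⟩ := Prod.mk.inj hbc
    obtain rfl : b = c := mul_left_cancel₀ h.ne_zero (add_right_cancel h₁)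
    obtain rfl : y = z := mul_left_cancel₀ h.ne_zero (add_right_cancel h₂)
    rfl
  c3 := by
    refine Finite.injective_iff_bijective.mp ?_
    rintro ⟨b, y⟩ ⟨c, z⟩ hbc
    simp only [sub_self, Prod.mk.injEq] at hbc
    obtain rfl : y = z := mul_left_cancel₀ h.ne_zero (add_right_cancel hbc.2)
    obtain rfl : b = c := mul_left_cancel₀ h.ne_zero (add_right_cancel hbc.1)
    rfl

theorem ofParams_op (h : IsAdmissible Φ α) (a b x y : ZMod p) :
    (ofParams h).op (a, x) (b, y) = (α * b + α * x, α * y + α * Φ (b - a)) := rfl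

theorem eq_ofParams (h : IsAdmissible Φ α) {C : CycleSet (ZMod p × ZMod p)}
    (hC : ∀ a b x y, C.op (a, x) (b, y) = (α * b + α * x, α * y + α * Φ (b - a))) :
    C = ofParams h :=
  eq_of_op_eq (funext fun u => funext fun v => hC u.1 v.1 u.2 v.2)

theorem irretractable_ofParams (h : IsAdmissible Φ α) : (ofParams h).Irretractable := by
  rintro ⟨a, x⟩ ⟨b, y⟩ hab
  have hop : ∀ c, α * c + α * x = α * c + α * y ∧ α * Φ (c - a) = α * Φ (c - b) := fun c => by
    simpa only [ofParams_op, mul_zero, zero_add, Prod.mk.injEq] using congrFun hab (c, 0)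
  obtain rfl : x = y := mul_left_cancel₀ h.ne_zero (add_left_cancel (hop 0).1)
  suffices hab' : a - b = 0 by rw [sub_eq_zero.mp hab']
  by_contra hne
  obtain ⟨i, j, hij⟩ := h.nonconst
  refine hij (eq_of_periodic_zmod (c := a - b) (fun c => ?_) hne i j)
  have hc := mul_left_cancel₀ h.ne_zero (hop (c + a)).2
  rw [add_sub_cancel_right, add_sub_assoc] at hc
  exact hc.symm

theorem indecomposable_ofParams (h : IsAdmissible Φ α) : (ofParams h).Indecomposable := by
  refine indecomposable_of_forall_invariant fun c hc => ?_
  have hα := h.ne_zero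
  have hop : ∀ u u' v, c ((ofParams h).op u v) = c ((ofParams h).op u' v) :=
    fun u u' v => (hc u v).trans (hc u' v).symm
  have hfst : ∀ y a b, c (a, y) = c (b, y) := fun y =>
    eq_of_periodic_zmod (fun b => by
      have hb := hop (0, 1) (0, 0) (b / α, y / α - Φ (b / α))
      simp only [ofParams_op, ← mul_add, sub_zero, sub_add_cancel, add_zero, mul_one] at hb
      simpa only [mul_add, mul_div_cancel₀ _ hα, mul_one] using hb) hα
  obtain ⟨i, j, hij⟩ := h.nonconst
  have hsnd : ∀ b x y, c (b, x) = c (b, y) := fun b =>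
    eq_of_periodic_zmod (c := α * (Φ i - Φ j)) (fun y => by
      have hy := hop (b / α - i, 0) (b / α - j, 0) (b / α, y / α - Φ j)
      simp only [ofParams_op, sub_sub_cancel, mul_zero, add_zero, mul_sub,
        mul_div_cancel₀ _ hα, sub_add_cancel] at hy
      rwa [sub_add_eq_add_sub, add_sub_assoc, ← mul_sub] at hy)
      (mul_ne_zero hα (sub_ne_zero.mpr hij))
  rintro ⟨a, x⟩ ⟨b, y⟩
  exact (hfst x a b).trans (hsnd b x y)

end Params

section Isomorphisms

variable {p : ℕ} [Fact p.Prime] {Φ Φ' : ZMod p → ZMod p} {α α' : ZMod p}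

theorem apply_eq_of_forall_apply_op_eq (h : IsAdmissible Φ α)
    {g : ZMod p × ZMod p → ZMod p × ZMod p} {u u' : ZMod p × ZMod p}
    (hg : ∀ v, g ((ofParams h).op u v) = (ofParams h).op u' v) (b y : ZMod p) :
    g (b, y) = (b + α * (u'.2 - u.2),
      y + (Φ (b - α * (u'.1 + u.2)) - Φ (b - α * (u.1 + u.2)))) := by
  have hα := h.ne_zero
  obtain ⟨a, x⟩ := u
  obtain ⟨a', x'⟩ := u'
  have hv := hg (b / α - x, y / α - Φ (b / α - x - a))
  have hmul : ∀ s t, α * Φ (b / α - t - s) = Φ (b - α * (s + t)) := fun s t => by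
    rw [← h.map_mul]
    congr 1
    field_simp
    ring
  simp only [ofParams_op, mul_sub, hmul, mul_div_cancel₀ _ hα, sub_add_cancel] at hv
  rw [hv]
  simp only [Prod.mk.injEq]
  constructor <;> ring

theorem exists_translation_of_forall_exists_op (h : IsAdmissible Φ α) (hp : p ≠ 2)
    {g : ZMod p × ZMod p → ZMod p × ZMod p}
    (hg : ∀ u, ∃ u', ∀ v, g ((ofParams h).op u v) = (ofParams h).op u' v) :
    ∃ μ, ∀ b y, g (b, y) = (b + μ, y) := by
  obtain ⟨u₀, hu₀⟩ := hg 0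
  refine ⟨α * (u₀.2 - 0), fun b y => ?_⟩
  have hform := apply_eq_of_forall_apply_op_eq h hu₀
  rw [hform, Prod.mk.injEq, add_eq_left]
  refine ⟨rfl, eq_zero_of_forall_exists_eq_sub hp h.even
    (w := fun b => Φ (b - α * (u₀.1 + 0)) - Φ (b - α * (0 + 0))) (fun a => ?_) b⟩
  obtain ⟨u', hu'⟩ := hg (a / α, 0)
  refine ⟨α * u'.1, fun b => ?_⟩
  have hb := hform b 0
  rw [apply_eq_of_forall_apply_op_eq h hu', Prod.mk.injEq, add_zero, add_zero,
    mul_div_cancel₀ _ h.ne_zero] at hb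
  exact add_left_cancel hb.2.symm

theorem exists_translation_of_isIso (h : IsAdmissible Φ 1)
    {g : ZMod p × ZMod p → ZMod p × ZMod p} (hg : (ofParams h).IsIso (ofParams h) g)
    (hop : ∃ u u', ∀ v, g ((ofParams h).op u v) = (ofParams h).op u' v) :
    ∃ μ, ∀ b y, g (b, y) = (b + μ, y) := by
  obtain ⟨u, u', hu⟩ := hop
  have hform := apply_eq_of_forall_apply_op_eq h hu
  refine ⟨1 * (u'.2 - u.2), fun b y => ?_⟩
  have hb := hg.2 (b, y) (0, 0)
  rw [ofParams_op, hform, hform, hform, ofParams_op, Prod.mk.injEq] at hb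
  rw [hform, Prod.mk.injEq]
  exact ⟨rfl, by linear_combination -hb.1⟩

theorem op_add_one_snd (h : IsAdmissible Φ α) (a x : ZMod p) (v : ZMod p × ZMod p) :
    (ofParams h).op (a, x + 1 / α) v =
      (((ofParams h).op (a, x) v).1 + 1, ((ofParams h).op (a, x) v).2) := by
  rw [← Prod.mk.eta (p := v), ofParams_op, ofParams_op, mul_add, mul_div_cancel₀ _ h.ne_zero,
    add_assoc]

variable {h : IsAdmissible Φ α} {h' : IsAdmissible Φ' α'} {f : ZMod p × ZMod p → ZMod p × ZMod p}

/-- For odd `p` the horizontal translations are recognised among all permutations that permute the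
maps `σ_u` by left multiplication; for `p = 2` they are in addition automorphisms, because `α = 1`.
-/
theorem IsIso.exists_apply_add_one (hf : (ofParams h).IsIso (ofParams h') f) :
    ∃ μ, ∀ a x, f (a + 1, x) = ((f (a, x)).1 + μ, (f (a, x)).2) := by
  let e := Equiv.ofBijective f hf.1
  have he : ∀ w, f (e.symm w) = w := e.apply_symm_apply
  let g : ZMod p × ZMod p → ZMod p × ZMod p := fun w => f ((e.symm w).1 + 1, (e.symm w).2)
  have hgf : ∀ w, g (f w) = f (w.1 + 1, w.2) := fun w => by
    simp only [g, show e.symm (f w) = w from e.symm_apply_apply w]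
  suffices hg : ∃ μ, ∀ b y, g (b, y) = (b + μ, y) by
    obtain ⟨μ, hμ⟩ := hg
    exact ⟨μ, fun a x => (hgf (a, x)).symm.trans (hμ _ _)⟩
  have hop : ∀ u, ∃ u', ∀ v, g ((ofParams h').op u v) = (ofParams h').op u' v := fun u => by
    obtain ⟨w, rfl⟩ := hf.1.2 u
    refine ⟨f (w.1, w.2 + 1 / α), fun v => ?_⟩
    rw [← he v, ← hf.2, hgf, ← hf.2, op_add_one_snd]
  rcases ne_or_eq p 2 with hp | rfl
  · exact exists_translation_of_forall_exists_op h' hp hop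
  obtain rfl : α = 1 := Fin.eq_one_of_ne_zero α h.ne_zero
  obtain rfl : α' = 1 := Fin.eq_one_of_ne_zero α' h'.ne_zero
  obtain ⟨u', hu'⟩ := hop 0
  refine exists_translation_of_isIso h' ⟨?_, fun w w' => ?_⟩ ⟨0, u', hu'⟩
  · exact hf.1.comp (((Equiv.addRight (1 : ZMod 2)).prodCongr (Equiv.refl _)).bijective.comp
      e.symm.bijective)
  · rw [← he w, ← he w', ← hf.2, hgf, hgf, hgf, ← hf.2]
    congr 1
    simp only [ofParams, Prod.mk.injEq]
    constructor <;> ring_nf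

theorem IsIso.exists_eq_add_mul (hf : (ofParams h).IsIso (ofParams h') f) :
    ∃ (μ : ZMod p) (f₁ f₂ : ZMod p → ZMod p),
      μ ≠ 0 ∧ ∀ a x, f (a, x) = (f₁ x + μ * a, f₂ x) := by
  obtain ⟨μ, hμ⟩ := hf.exists_apply_add_one
  have hform : ∀ a x, f (a, x) = ((f (0, x)).1 + μ * a, (f (0, x)).2) := fun a x => by
    have hsnd : Function.Periodic (fun t => (f (t, x)).2) 1 := fun t => by
      simp only [hμ]
    refine Prod.ext ?_ (eq_of_periodic_zmod hsnd one_ne_zero a 0)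
    simpa only [div_one] using eq_add_div_mul_of_add_eq (f := fun t => (f (t, x)).1) one_ne_zero
      (fun t => congrArg Prod.fst (hμ t x)) a
  refine ⟨μ, fun x => (f (0, x)).1, fun x => (f (0, x)).2, ?_, hform⟩
  rintro rfl
  have h01 : f (0, 0) = f (1, 0) := by rw [hform 1 0, zero_mul, add_zero]
  exact zero_ne_one (congrArg Prod.fst (hf.1.1 h01))

theorem IsAdmissible.apply_zero (h : IsAdmissible Φ α) (hα : α ≠ 1) : Φ 0 = 0 := by
  have h0 := h.map_mul 0
  rw [mul_zero] at h0
  exact (mul_eq_zero.mp (by linear_combination h0 : (1 - α) * Φ 0 = 0)).resolve_left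
    (sub_ne_zero.mpr hα.symm)

theorem IsIso.eq_and_exists_affine (hf : (ofParams h).IsIso (ofParams h') f) :
    α = α' ∧ ∃ μ c, μ ≠ 0 ∧ (∀ a x, f (a, x) = (μ * a + c, μ * x)) ∧
      ∀ t, Φ' (μ * t) = μ * Φ t := by
  obtain ⟨μ, f₁, f₂, hμ, hform⟩ := hf.exists_eq_add_mul
  have hα := h.ne_zero
  have hop : ∀ a x b y, f₁ (α * y + α * Φ (b - a)) + μ * (α * b + α * x) =
      α' * (f₁ y + μ * b) + α' * f₂ x ∧
      f₂ (α * y + α * Φ (b - a)) = α' * f₂ y + α' * Φ' (f₁ y + μ * b - (f₁ x + μ * a)) :=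
    fun a x b y => by simpa only [ofParams_op, hform, Prod.mk.injEq] using hf.2 (a, x) (b, y)
  obtain rfl : α = α' := mul_right_cancel₀ hμ (by
    have h₀ := (hop 0 0 0 0).1
    have h₁ := (hop 1 0 1 0).1
    rw [sub_self] at h₀ h₁
    linear_combination h₁ - h₀)
  have hf₂ : ∀ x, f₂ x = μ * x + f₂ 0 := fun x => mul_left_cancel₀ hα (by
    linear_combination (hop 0 0 0 0).1 - (hop 0 x 0 0).1)
  have hf₁_step : ∀ y k, f₁ (α * y + α * Φ k) = α * f₁ y + α * f₂ 0 := fun y k => by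
    have hk := (hop 0 0 k y).1
    rw [sub_zero] at hk
    linear_combination hk
  have hf₁ : ∀ x, f₁ x = f₁ 0 := fun x => by
    obtain ⟨i, j, hij⟩ := h.nonconst
    refine eq_of_periodic_zmod (c := α * (Φ i - Φ j)) (fun y => ?_)
      (mul_ne_zero hα (sub_ne_zero.mpr hij)) x 0
    have hi := hf₁_step (y / α - Φ j) i
    rw [← hf₁_step (y / α - Φ j) j] at hi
    convert hi using 2 <;> field_simp <;> ring
  have hΦ : ∀ k, α * Φ' (μ * k) = α * (μ * Φ k) + (1 - α) * f₂ 0 := fun k => by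
    have hk := (hop 0 0 k 0).2
    rw [hf₂, hf₁ 0, show f₁ 0 + μ * k - (f₁ 0 + μ * 0) = μ * k by ring, sub_zero] at hk
    linear_combination -hk
  have hν : f₂ 0 = 0 := by
    rcases eq_or_ne α 1 with rfl | hα₁
    · linear_combination -hf₁_step 0 0 + hf₁ (1 * 0 + 1 * Φ 0)
    have h0 := hΦ 0
    rw [mul_zero, h.apply_zero hα₁, h'.apply_zero hα₁, mul_zero, mul_zero, mul_zero, zero_add,
      zero_eq_mul] at h0
    exact h0.resolve_left (sub_ne_zero.mpr hα₁.symm)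
  refine ⟨rfl, μ, f₁ 0, hμ, fun a x => ?_, fun t => mul_left_cancel₀ hα ?_⟩
  · rw [hform, hf₁, hf₂, hν, add_zero, add_comm]
  · rw [hΦ, hν, mul_zero, add_zero]

theorem iso_ofParams_iff (h : IsAdmissible Φ α) (h' : IsAdmissible Φ' α') :
    (ofParams h).Iso (ofParams h') ↔
      α = α' ∧ ∃ β : ZMod p, β ≠ 0 ∧ ∀ A, β⁻¹ * Φ (β * A) = Φ' A := by
  constructor
  · rintro ⟨f, hf⟩
    obtain ⟨hα, μ, -, hμ, -, hΦ⟩ := hf.eq_and_exists_affine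
    refine ⟨hα, μ⁻¹, inv_ne_zero hμ, fun A => ?_⟩
    rw [inv_inv, ← hΦ, mul_inv_cancel_left₀ hμ]
  · rintro ⟨rfl, β, hβ, hΦ⟩
    let e := (Equiv.mulLeft₀ β⁻¹ (inv_ne_zero hβ)).prodCongr (Equiv.mulLeft₀ β⁻¹ (inv_ne_zero hβ))
    refine ⟨e, e.bijective, fun u v => ?_⟩
    have hΦ' : Φ' (β⁻¹ * v.1 - β⁻¹ * u.1) = β⁻¹ * Φ (v.1 - u.1) := by
      rw [← hΦ, ← mul_sub, mul_inv_cancel_left₀ hβ]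
    simp only [ofParams, e, Equiv.prodCongr_apply, Prod.map, Equiv.mulLeft₀_apply, hΦ',
      Prod.mk.injEq]
    constructor <;> ring

end Isomorphisms

end CycleSet

section GroupActions

open MulAction Pointwise

variable {G X : Type*} [Group G] [MulAction G X]

theorem smul_eq_of_normal_of_coprime [Finite X] [IsPretransitive G X] (N : Subgroup G) [N.Normal]
    (hN : (Nat.card N).Coprime (Nat.card X)) {g : G} (hg : g ∈ N) (x : X) : g • x = x := by
  have hdvd : (orbit N x).ncard ∣ Nat.card N :=
    index_stabilizer N x ▸ Subgroup.index_dvd_card _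
  have hone := Nat.eq_one_of_dvd_coprimes hN hdvd
    ((IsBlock.orbit_of_normal (N := N) x).ncard_dvd_card ⟨x, mem_orbit_self x⟩)
  obtain ⟨y, hy⟩ := Set.ncard_eq_one.mp hone
  have hx : x ∈ orbit N x := mem_orbit_self x
  have hgx : g • x ∈ orbit N x := mem_orbit x (⟨g, hg⟩ : N)
  rw [hy, Set.mem_singleton_iff] at hx hgx
  exact hgx.trans hx.symm

theorem smul_eq_of_le_normalizer_of_coprime [Finite X] {P N : Subgroup G} [IsPretransitive P X]
    (hP : P ≤ Subgroup.normalizer N) (hN : (Nat.card N).Coprime (Nat.card X)) {g : G}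
    (hg : g ∈ N) (x : X) : g • x = x := by
  let L := Subgroup.normalizer (N : Set G)
  have : IsPretransitive L X :=
    ⟨fun x y => (exists_smul_eq P x y).imp' (Subgroup.inclusion hP) fun _ h => h⟩
  have hNL : N ≤ L := Subgroup.le_normalizer
  refine smul_eq_of_normal_of_coprime (G := L) (N.subgroupOf L) ?_
    (g := ⟨g, hNL hg⟩) (Subgroup.mem_subgroupOf.mpr hg) x
  rwa [Nat.card_congr (Subgroup.subgroupOfEquivOfLe hNL).toEquiv]

theorem ncard_range_mul_ncard_fiber {Z : Type*} [MulAction G Z] [IsPretransitive G X] {f : X → Z}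
    (hf : ∀ (g : G) x, f (g • x) = g • f x) (x₀ : X) :
    (Set.range f).ncard * {x | f x = f x₀}.ncard = Nat.card X := by
  have hfiber : ∀ z : Set.range f, Nonempty ({x // f x = z} ≃ {x // f x = f x₀}) := by
    rintro ⟨_, x, rfl⟩
    obtain ⟨g, rfl⟩ := exists_smul_eq G x₀ x
    refine ⟨((MulAction.toPerm g).subtypeEquiv fun y => ?_).symm⟩
    change f y = f x₀ ↔ f (g • y) = f (g • x₀)
    rw [hf, hf, smul_left_cancel_iff]
  rw [← Nat.card_coe_set_eq, ← Nat.card_coe_set_eq, ← Nat.card_prod]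
  refine Nat.card_congr ((Equiv.sigmaEquivProdOfEquiv fun z => (hfiber z).some).symm.trans ?_)
  exact (Equiv.sigmaCongrRight fun z => Equiv.subtypeEquivRight fun x =>
    (Subtype.ext_iff (a1 := Set.rangeFactorization f x)).symm).trans
      (Equiv.sigmaFiberEquiv (Set.rangeFactorization f))

theorem range_eq_orbit {Z : Type*} [MulAction G Z] [IsPretransitive G X] {f : X → Z}
    (hf : ∀ (g : G) x, f (g • x) = g • f x) (x₀ : X) : Set.range f = orbit G (f x₀) := by
  ext z
  constructor
  · rintro ⟨x, rfl⟩
    obtain ⟨g, rfl⟩ := exists_smul_eq G x₀ x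
    exact ⟨g, (hf g x₀).symm⟩
  · rintro ⟨g, rfl⟩
    exact ⟨g • x₀, hf g x₀⟩

theorem smul_apply_eq_of_forall_exists_smul_smul_eq [Finite X] [IsPretransitive G X] {Z : Type*}
    [MulAction G Z] {f : X → Z} (hf : ∀ (g : G) x, f (g • x) = g • f x) {P N : Subgroup G}
    (htrans : ∀ x y, ∃ g ∈ P, g • f x = f y)
    (hconj : ∀ g ∈ P, ∀ h ∈ N, ∃ h' ∈ N, ∀ x, h' • g • f x = g • h • f x)
    (hN : (Nat.card N).Coprime (Nat.card X)) {g : G} (hg : g ∈ N) (x : X) :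
    g • f x = f x := by
  have hrange := range_eq_orbit hf x
  have : Finite (orbit G (f x)) := hrange ▸ Set.finite_range f
  have hY : Nat.card (orbit G (f x)) ∣ Nat.card X := by
    rw [Nat.card_coe_set_eq, ← hrange]
    exact Dvd.intro _ (ncard_range_mul_ncard_fiber hf x)
  let ρ := toPermHom G (orbit G (f x))
  have : IsPretransitive (P.map ρ) (orbit G (f x)) := ⟨fun y z => by
    obtain ⟨u, hu⟩ := hrange.ge y.2
    obtain ⟨v, hv⟩ := hrange.ge z.2
    obtain ⟨g, hg, hguv⟩ := htrans u v
    exact ⟨⟨ρ g, Subgroup.mem_map_of_mem ρ hg⟩, Subtype.ext (by rw [← hv, ← hguv, hu]; rfl)⟩⟩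
  refine congrArg Subtype.val (smul_eq_of_le_normalizer_of_coprime (P := P.map ρ) (N := N.map ρ)
    (Subgroup.le_normalizer_iff.mpr ?_)
    ((hN.coprime_dvd_left (Subgroup.card_map_dvd N ρ)).coprime_dvd_right hY)
    (Subgroup.mem_map_of_mem ρ hg) ⟨f x, mem_orbit_self _⟩)
  rintro _ ⟨g, hg, rfl⟩ _ ⟨h, hh, rfl⟩
  obtain ⟨h', hh', h_eq⟩ := hconj g hg h hh
  refine ⟨h', hh', eq_mul_inv_of_mul_eq (Equiv.ext fun y => Subtype.ext ?_)⟩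
  obtain ⟨u, hu⟩ := hrange.ge y.2
  change h' • g • y.1 = g • h • y.1
  rw [← hu, h_eq]

theorem smul_eq_of_isPGroup_of_ncard_lt {p : ℕ} [Fact p.Prime] (hG : IsPGroup p G) {s : Set X}
    (hs : s.Finite) (hsmul : ∀ (g : G), ∀ x ∈ s, g • x ∈ s) (hcard : s.ncard < p) (g : G) {x : X}
    (hx : x ∈ s) : g • x = x := by
  have hsub : orbit G x ⊆ s := by
    rintro _ ⟨g, rfl⟩
    exact hsmul g x hx
  have : Finite (orbit G x) := (hs.subset hsub).to_subtype
  obtain ⟨n, hn⟩ := hG.card_orbit x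
  have hlt : p ^ n < p ^ 1 := by
    rw [← hn, Nat.card_coe_set_eq, pow_one]
    exact (Set.ncard_le_ncard hsub hs).trans_lt hcard
  rw [Nat.pow_lt_pow_iff_right (Fact.out : p.Prime).one_lt, Nat.lt_one_iff] at hlt
  rw [hlt, pow_zero, Nat.card_eq_one_iff_unique] at hn
  exact congrArg Subtype.val (hn.1.elim ⟨g • x, mem_orbit x g⟩ ⟨x, mem_orbit_self x⟩)

theorem isPretransitive_of_index_coprime [Finite X] [IsPretransitive G X] (P : Subgroup G)
    (hP : P.index.Coprime (Nat.card X)) : IsPretransitive P X := by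
  rcases isEmpty_or_nonempty X with _ | ⟨⟨x⟩⟩
  · exact ⟨fun x => isEmptyElim x⟩
  rw [isPretransitive_iff_orbit_eq_univ x]
  have horbit : (orbit P x).ncard = (stabilizer G x).relIndex P := (index_stabilizer P x).symm
  have hindex : (stabilizer G x).relIndex P * P.index =
      P.relIndex (stabilizer G x) * Nat.card X := by
    rw [← Subgroup.inf_relIndex_right, Subgroup.relIndex_mul_index inf_le_right,
      ← Subgroup.inf_relIndex_left, ← index_stabilizer_of_transitive G x,
      Subgroup.relIndex_mul_index inf_le_left]
  have hdvd : Nat.card X ∣ (orbit P x).ncard :=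
    hP.symm.dvd_of_dvd_mul_right (horbit ▸ hindex ▸ dvd_mul_left _ _)
  refine Set.eq_of_subset_of_ncard_le (Set.subset_univ _) ?_
  rw [Set.ncard_univ]
  exact Nat.le_of_dvd ((Set.ncard_pos (Set.toFinite _)).mpr ⟨x, mem_orbit_self x⟩) hdvd

theorem smul_eq_smul_of_mem_center {z : G} (hz : z ∈ Subgroup.center G) (g : G) (x : X) :
    z • g • x = g • z • x := by
  rw [smul_smul, smul_smul, Subgroup.mem_center_iff.mp hz g]

theorem eq_of_mem_center_of_smul_eq [FaithfulSMul G X] [IsPretransitive G X] {z z' : G}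
    (hz : z ∈ Subgroup.center G) (hz' : z' ∈ Subgroup.center G) {x : X} (h : z • x = z' • x) :
    z = z' :=
  eq_of_smul_eq_smul fun y : X => by
    obtain ⟨g, rfl⟩ := exists_smul_eq G x y
    rw [smul_eq_smul_of_mem_center hz, h, smul_eq_smul_of_mem_center hz']

end GroupActions

section PGroups

open MulAction Pointwise

variable {p : ℕ} {G X : Type*} [Group G]

theorem pow_zmod_val_add [NeZero p] {z : G} (hz : z ^ p = 1) (a b : ZMod p) :
    z ^ (a + b).val = z ^ a.val * z ^ b.val := by
  rw [ZMod.val_add, ← pow_add, ← pow_mod_orderOf,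
    Nat.mod_mod_of_dvd _ (orderOf_dvd_of_pow_eq_one hz), pow_mod_orderOf]

variable [Fact p.Prime]

theorem exists_mem_center_orderOf_eq [Finite G] [Nontrivial G] (hG : IsPGroup p G) :
    ∃ z ∈ Subgroup.center G, orderOf z = p := by
  have hcenter := hG.center_nontrivial
  obtain ⟨n, hn, hcard⟩ := (hG.to_subgroup (Subgroup.center G)).nontrivial_iff_card.mp hcenter
  obtain ⟨z, hz⟩ := exists_prime_orderOf_dvd_card' (G := Subgroup.center G) p
    (hcard ▸ dvd_pow_self p hn.ne')
  exact ⟨z, z.2, (Subgroup.orderOf_coe z).trans hz⟩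

theorem exists_zmod_hom_ker_eq [Finite G] (hG : IsPGroup p G) {M : Subgroup G}
    (hM : M.index = p) :
    ∃ s : G →* Multiplicative (ZMod p), Function.Surjective s ∧ s.ker = M := by
  have hp : p.Prime := Fact.out
  obtain ⟨n, hn⟩ := IsPGroup.iff_card.mp hG
  have hn0 : n ≠ 0 := by
    rintro rfl
    have hdvd := M.index_dvd_card
    rw [hM, hn, pow_zero] at hdvd
    exact hp.one_lt.ne' (Nat.dvd_one.mp hdvd)
  have : M.Normal := Subgroup.normal_of_index_eq_minFac_card (by rw [hM, hn, hp.pow_minFac hn0])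
  have hcard : Nat.card (Multiplicative (ZMod p)) = p := by simp
  let e : G ⧸ M ≃* Multiplicative (ZMod p) := mulEquivOfPrimeCardEq hM hcard
  refine ⟨e.toMonoidHom.comp (QuotientGroup.mk' M),
    e.surjective.comp (QuotientGroup.mk'_surjective M), ?_⟩
  rw [MonoidHom.ker_comp_of_injective _ _ e.injective, QuotientGroup.ker_mk']

variable [MulAction G X]

theorem exists_zmod_equiv_of_card_eq [Finite G] [IsPretransitive G X] (hG : IsPGroup p G)
    (hX : Nat.card X = p) :
    ∃ (s : G →* Multiplicative (ZMod p)) (E : ZMod p ≃ X),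
      ∀ g i, g • E i = E (i + (s g).toAdd) := by
  have : Nonempty X := (Nat.card_pos_iff.mp (hX ▸ (Fact.out : p.Prime).pos)).1
  obtain ⟨x₀⟩ := this
  obtain ⟨s, hs, hker⟩ := exists_zmod_hom_ker_eq hG
    ((index_stabilizer_of_transitive G x₀).trans hX)
  have hs_iff : ∀ g h, s g = s h ↔ g • x₀ = h • x₀ := fun g h => by
    rw [MonoidHom.eq_iff, hker, mem_stabilizer_iff, mul_smul, inv_smul_eq_iff, eq_comm]
  choose r hr using fun i : ZMod p => hs (Multiplicative.ofAdd i)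
  have hbij : Function.Bijective fun i => r i • x₀ := by
    refine ⟨fun i j hij => ?_, fun x => ?_⟩
    · exact Multiplicative.ofAdd.injective (by rw [← hr, ← hr, (hs_iff _ _).mpr hij])
    · obtain ⟨g, rfl⟩ := exists_smul_eq G x₀ x
      exact ⟨(s g).toAdd, (hs_iff _ _).mp (hr _)⟩
  refine ⟨s, Equiv.ofBijective _ hbij, fun g i => ?_⟩
  simp only [Equiv.ofBijective_apply]
  rw [smul_smul, ← hs_iff, map_mul, hr, hr, ofAdd_add, ofAdd_toAdd, mul_comm]

theorem exists_smul_pow_smul_eq {z : G} (hz : z ∈ Subgroup.center G) (hzp : z ^ p = 1) {x₀ : X}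
    {s : G →* Multiplicative (ZMod p)} (hs : ∀ g, s g = 1 ↔ ∃ k : ℕ, g • x₀ = z ^ k • x₀) {τ : G}
    (hτ : s τ = Multiplicative.ofAdd 1) (g : G) (b : ZMod p) :
    ∃ c : ZMod p, ∀ y : ZMod p, g • τ ^ b.val • z ^ y.val • x₀ =
      τ ^ (b + (s g).toAdd).val • z ^ (y + c).val • x₀ := by
  have hsτ : ∀ a : ZMod p, s (τ ^ a.val) = Multiplicative.ofAdd a := fun a => by
    rw [map_pow, hτ, ← ofAdd_nsmul, nsmul_one, ZMod.natCast_zmod_val]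
  obtain ⟨k, hk⟩ := (hs ((τ ^ (b + (s g).toAdd).val)⁻¹ * (g * τ ^ b.val))).mp (by
    rw [map_mul, map_inv, map_mul, hsτ, hsτ, ofAdd_add, ofAdd_toAdd, mul_comm, mul_comm (s g),
      mul_inv_cancel])
  have hzk : z ^ k = z ^ (k : ZMod p).val := by
    rw [ZMod.val_natCast, ← pow_mod_orderOf, ← pow_mod_orderOf z (k % p),
      Nat.mod_mod_of_dvd _ (orderOf_dvd_of_pow_eq_one hzp)]
  refine ⟨k, fun y => ?_⟩
  have hzy : z ^ y.val ∈ Subgroup.center G := pow_mem hz _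
  rw [mul_smul, inv_smul_eq_iff, mul_smul, hzk] at hk
  rw [pow_zmod_val_add hzp, mul_smul, ← smul_eq_smul_of_mem_center hzy,
    ← smul_eq_smul_of_mem_center hzy, hk, smul_eq_smul_of_mem_center hzy]

variable [IsPretransitive G X]

theorem exists_zmod_hom_eq_one_iff [Finite G] (hG : IsPGroup p G) [FaithfulSMul G X]
    (hX : Nat.card X = p ^ 2) {z : G} (hz : z ∈ Subgroup.center G) (hzp : orderOf z = p) (x₀ : X) :
    ∃ s : G →* Multiplicative (ZMod p), Function.Surjective s ∧
      ∀ g, s g = 1 ↔ ∃ k : ℕ, g • x₀ = z ^ k • x₀ := by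
  have hp : p.Prime := Fact.out
  have : Finite X := Nat.finite_of_card_ne_zero (hX ▸ pow_ne_zero 2 hp.ne_zero)
  let N := Subgroup.zpowers z
  have hNcenter : N ≤ Subgroup.center G := (Subgroup.zpowers_le).mpr hz
  have : N.Normal := ⟨fun n hn g => by
    rwa [Subgroup.mem_center_iff.mp (hNcenter hn) g, mul_inv_cancel_right]⟩
  let B := orbit N x₀
  have hB : IsBlock G B := IsBlock.orbit_of_normal x₀
  have hx₀ : x₀ ∈ B := mem_orbit_self x₀
  have hBcard : B.ncard = p := by
    have hstab : stabilizer N x₀ = ⊥ := (Subgroup.eq_bot_iff_forall _).mpr fun n hn =>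
      Subtype.ext (eq_of_mem_center_of_smul_eq (hNcenter n.2) (one_mem _)
        (hn.trans (one_smul G x₀).symm))
    rw [← index_stabilizer, hstab, Subgroup.index_bot, Nat.card_zpowers, hzp]
  have hindex : (stabilizer G B).index = p := by
    have hmul := hB.ncard_block_mul_ncard_orbit_eq ⟨x₀, hx₀⟩
    rw [hBcard, hX, pow_two] at hmul
    rw [index_stabilizer]
    exact Nat.eq_of_mul_eq_mul_left hp.pos hmul
  obtain ⟨s, hs, hker⟩ := exists_zmod_hom_ker_eq hG hindex
  refine ⟨s, hs, fun g => ?_⟩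
  rw [← MonoidHom.mem_ker, hker, mem_stabilizer_iff]
  constructor
  · intro hg
    obtain ⟨⟨n, hn⟩, hng⟩ : g • x₀ ∈ B := hg ▸ Set.smul_mem_smul_set hx₀
    obtain ⟨k, rfl⟩ := mem_powers_iff_mem_zpowers.mpr hn
    exact ⟨k, hng.symm⟩
  · rintro ⟨k, hk⟩
    exact hB.smul_eq_of_mem hx₀ (hk ▸ ⟨⟨z ^ k, pow_mem (Subgroup.mem_zpowers z) k⟩, rfl⟩)

theorem bijective_pow_smul_pow_smul [FaithfulSMul G X] (hX : Nat.card X = p ^ 2) {z : G}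
    (hz : z ∈ Subgroup.center G) (hzp : orderOf z = p) {x₀ : X} {s : G →* Multiplicative (ZMod p)}
    (hs : ∀ g, s g = 1 ↔ ∃ k : ℕ, g • x₀ = z ^ k • x₀) {τ : G}
    (hτ : s τ = Multiplicative.ofAdd 1) :
    Function.Bijective fun u : ZMod p × ZMod p => τ ^ u.1.val • z ^ u.2.val • x₀ := by
  have : Finite X :=
    Nat.finite_of_card_ne_zero (hX ▸ pow_ne_zero 2 (Fact.out : p.Prime).ne_zero)
  have := Fintype.ofFinite X
  rw [Fintype.bijective_iff_injective_and_card]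
  refine ⟨?_, by rw [← Nat.card_eq_fintype_card, ← Nat.card_eq_fintype_card, hX,
    Nat.card_prod, Nat.card_zmod, pow_two]⟩
  rintro ⟨a, x⟩ ⟨b, y⟩ h
  have hsz : ∀ k : ℕ, s (z ^ k) = 1 := fun k => (hs _).mpr ⟨k, rfl⟩
  have hsτ : ∀ k : ℕ, s (τ ^ k) = Multiplicative.ofAdd (k : ZMod p) := fun k => by
    rw [map_pow, hτ, ← ofAdd_nsmul, nsmul_one]
  have hs_eq : ∀ {g g' : G}, g • x₀ = g' • x₀ → s g = s g' := fun {g g'} hg => by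
    have hone : s (g'⁻¹ * g) = 1 := (hs _).mpr ⟨0, by
      rw [mul_smul, hg, inv_smul_smul, pow_zero, one_smul]⟩
    rwa [map_mul, map_inv, inv_mul_eq_one, eq_comm] at hone
  obtain rfl : a = b := by
    simp only [smul_smul] at h
    have hab := hs_eq h
    rw [map_mul, map_mul, hsz, hsz, hsτ, hsτ, mul_one, mul_one, ZMod.natCast_zmod_val,
      ZMod.natCast_zmod_val] at hab
    exact Multiplicative.ofAdd.injective hab
  have hxy := eq_of_mem_center_of_smul_eq (pow_mem hz _) (pow_mem hz _) (smul_left_cancel _ h)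
  rw [pow_inj_mod, hzp, Nat.mod_eq_of_lt (ZMod.val_lt x), Nat.mod_eq_of_lt (ZMod.val_lt y)] at hxy
  rw [ZMod.val_injective p hxy]

theorem exists_coordinates [Finite G] (hG : IsPGroup p G) [FaithfulSMul G X]
    (hX : Nat.card X = p ^ 2) :
    ∃ s : G →* Multiplicative (ZMod p), Function.Surjective s ∧
      ∀ τ : G, s τ = Multiplicative.ofAdd 1 → ∃ E : ZMod p × ZMod p ≃ X,
        (∀ g, ∃ f : ZMod p → ZMod p, ∀ b y, g • E (b, y) = E (b + (s g).toAdd, y + f b)) ∧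
        (τ ^ p = 1 → ∀ b y, τ • E (b, y) = E (b + 1, y)) := by
  have hp : p.Prime := Fact.out
  have : Nontrivial X := by
    have : Finite X := Nat.finite_of_card_ne_zero (hX ▸ pow_ne_zero 2 hp.ne_zero)
    rw [← Finite.one_lt_card_iff_nontrivial, hX]
    exact Nat.one_lt_pow two_ne_zero hp.one_lt
  obtain ⟨x₀, x₁, hx⟩ := exists_pair_ne X
  obtain ⟨g, hg⟩ := exists_smul_eq G x₀ x₁
  have : Nontrivial G := ⟨g, 1, fun h => hx (by rw [← hg, h, one_smul])⟩
  obtain ⟨z, hz, hzp⟩ := exists_mem_center_orderOf_eq hG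
  obtain ⟨s, hs, hs_iff⟩ := exists_zmod_hom_eq_one_iff hG hX hz hzp x₀
  refine ⟨s, hs, fun τ hτ =>
    ⟨Equiv.ofBijective _ (bijective_pow_smul_pow_smul hX hz hzp hs_iff hτ), fun g => ?_,
      fun hτp b y => ?_⟩⟩
  · choose f hf using exists_smul_pow_smul_eq hz (hzp ▸ pow_orderOf_eq_one z) hs_iff hτ g
    exact ⟨f, hf⟩
  · have : Fact (1 < p) := ⟨hp.one_lt⟩
    simp only [Equiv.ofBijective_apply]
    rw [add_comm, pow_zmod_val_add hτp, ZMod.val_one, pow_one, mul_smul]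

end PGroups

section Torsion

open AddSubgroup

variable {G A : Type*} [AddCommGroup A]

theorem exists_zsmul_projection {k l : ℕ} (hkl : k.Coprime l) (hA : Nat.card A = k * l) :
    ∃ e : ℤ, (∀ a : A, e • a ∈ torsionBy A k ∧ a - e • a ∈ torsionBy A l) ∧
      (∀ a ∈ torsionBy A k, e • a = a) ∧ ∀ a ∈ torsionBy A l, e • a = 0 := by
  have hcop : IsCoprime (k : ℤ) l := Nat.isCoprime_iff_coprime.mpr hkl
  have htor : ∀ a : A, ((k : ℤ) * l) • a = 0 := fun a => by
    rw [← Nat.cast_mul, ← hA, natCast_zsmul, card_nsmul_eq_zero']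
  obtain ⟨u, w, huw⟩ := hcop
  have hsub : ∀ a : A, a - (w * l) • a = (u * k) • a := fun a => by
    rw [sub_eq_iff_eq_add, ← add_zsmul, huw, one_zsmul]
  refine ⟨w * l, fun a => ⟨?_, ?_⟩, fun a ha => ?_, fun a ha => ?_⟩
  · rw [Submodule.mem_toAddSubgroup, Submodule.mem_torsionBy_iff, ← mul_zsmul', mul_assoc,
      mul_comm (l : ℤ), mul_zsmul, htor, smul_zero]
  · rw [hsub, Submodule.mem_toAddSubgroup, Submodule.mem_torsionBy_iff, ← mul_zsmul', mul_assoc,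
      mul_zsmul, htor, smul_zero]
  · rw [eq_comm, ← sub_eq_zero, hsub, mul_zsmul, (Submodule.mem_torsionBy_iff _ _).mp ha,
      smul_zero]
  · rw [mul_zsmul, (Submodule.mem_torsionBy_iff _ _).mp ha, smul_zero]

theorem card_torsionBy_dvd_pow [Finite A] (k : ℕ) :
    ∃ r, Nat.card (torsionBy A k) ∣ k ^ r :=
  ⟨_, card_dvd_exponent_nsmul_rank' (torsionBy A k) fun a => torsionBy.nsmul a⟩

theorem card_torsionBy [Finite A] {k l : ℕ} (hkl : k.Coprime l) (hA : Nat.card A = k * l) :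
    Nat.card (torsionBy A k) = k := by
  obtain ⟨e, he, hek, hel⟩ := exists_zsmul_projection hkl hA
  have hmul : Nat.card (torsionBy A k) * Nat.card (torsionBy A l) = k * l := by
    rw [← Nat.card_prod, ← hA]
    refine (Nat.card_congr (Equiv.mk (β := torsionBy A k × torsionBy A l)
      (fun a => (⟨_, (he a).1⟩, ⟨_, (he a).2⟩)) (fun u => u.1 + u.2)
      (fun a => add_sub_cancel (e • a) a) fun u => ?_)).symm
    have hu : e • (u.1 + u.2 : A) = u.1 := by
      rw [smul_add, hek _ u.1.2, hel _ u.2.2, add_zero]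
    ext <;> simp [hu]
  obtain ⟨r, hr⟩ := card_torsionBy_dvd_pow (A := A) k
  obtain ⟨r', hr'⟩ := card_torsionBy_dvd_pow (A := A) l
  refine Nat.dvd_antisymm ?_ ?_
  · exact ((hkl.pow_left r).coprime_dvd_left hr).dvd_of_dvd_mul_right (hmul ▸ dvd_mul_right _ _)
  · exact ((hkl.pow_right r').coprime_dvd_right hr').dvd_of_dvd_mul_right
      (hmul ▸ dvd_mul_right _ _)

theorem smul_mem_torsionBy [Group G] [DistribMulAction G A] {k : ℤ} (g : G) {a : A}
    (ha : a ∈ torsionBy A k) : g • a ∈ torsionBy A k := by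
  rw [Submodule.mem_toAddSubgroup, Submodule.mem_torsionBy_iff] at ha ⊢
  rw [smul_comm, ha, smul_zero]

/-- The action on `A` restricted to the subgroup of `k`-torsion elements. -/
instance torsionByDistribMulAction [Group G] [DistribMulAction G A] (k : ℤ) :
    DistribMulAction G (torsionBy A k) where
  smul g a := ⟨g • (a : A), smul_mem_torsionBy g a.2⟩
  one_smul a := Subtype.ext (one_smul G (a : A))
  mul_smul g h a := Subtype.ext (mul_smul g h (a : A))
  smul_zero g := Subtype.ext (smul_zero g)
  smul_add g a b := Subtype.ext (smul_add g (a : A) b)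

end Torsion

/-- A left brace together with a cycle base: an additive group `A` acted upon by a group `G`, a
bijection `circ` of `A` with `G` which transports the multiplication of `G` to the circle operation
of the brace (written from right to left), and a `G`-set `X` mapped by `ι` onto generators
of `A`. -/
structure CycleBase (G A X : Type*) [Group G] [AddCommGroup A] [DistribMulAction G A]
    [MulAction G X] where
  circ : A ≃ G
  circ_add : ∀ a b, circ (a + b) = circ (circ a • b) * circ a
  ι : X → A
  smul_ι : ∀ (g : G) x, g • ι x = ι (g • x)
  closure_range_ι : AddSubgroup.closure (Set.range ι) = ⊤

namespace CycleBase

open AddSubgroup MulAction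

variable {G A X : Type*} [Group G] [AddCommGroup A] [DistribMulAction G A] [MulAction G X]
  (B : CycleBase G A X)

theorem circ_zero : B.circ 0 = 1 := by
  simpa using B.circ_add 0 0

theorem circ_smul_mul_circ (a b : A) :
    B.circ (B.circ a • b) * B.circ a = B.circ (B.circ b • a) * B.circ b := by
  rw [← B.circ_add, ← B.circ_add, add_comm]

theorem circ_mul_circ (a b : A) :
    B.circ a * B.circ b = B.circ (b + (B.circ b)⁻¹ • a) := by
  rw [B.circ_add, smul_inv_smul]

theorem circ_mul_circ_of_smul_eq {a b : A} (h : B.circ b • a = a) :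
    B.circ a * B.circ b = B.circ (B.circ a • b) * B.circ a := by
  rw [B.circ_smul_mul_circ, h]

theorem circ_symm_mul (g h : G) :
    B.circ.symm (g * h) = B.circ.symm h + h⁻¹ • B.circ.symm g := by
  rw [Equiv.symm_apply_eq, B.circ_add, Equiv.apply_symm_apply, smul_inv_smul,
    Equiv.apply_symm_apply]

theorem circ_symm_inv (g : G) : B.circ.symm g⁻¹ = -(g • B.circ.symm g) := by
  have h := B.circ_symm_mul g⁻¹ g
  rw [inv_mul_cancel, ← B.circ_zero, Equiv.symm_apply_apply] at h
  rw [eq_neg_iff_add_eq_zero, add_comm, ← smul_inv_smul g (B.circ.symm g⁻¹), ← smul_add, ← h,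
    smul_zero]

theorem zsmul_eq_of_smul_ι {g : G} {e : ℤ} (h : ∀ x, g • e • B.ι x = e • B.ι x) (a : A) :
    g • e • a = e • a := by
  have ha : a ∈ AddSubgroup.closure (Set.range B.ι) := B.closure_range_ι ▸ mem_top a
  induction ha using AddSubgroup.closure_induction with
  | mem a ha =>
    obtain ⟨x, rfl⟩ := ha
    exact h x
  | zero => rw [smul_zero, smul_zero]
  | add a b _ _ ha hb => rw [smul_add, smul_add, ha, hb]
  | neg a _ ha => rw [smul_neg, smul_neg, ha]

/-- The subgroup of `G` that corresponds to the `k`-torsion of `A`. -/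
def torsionSubgroup (k : ℤ) : Subgroup G where
  carrier := {g | B.circ.symm g ∈ torsionBy A k}
  one_mem' := by
    rw [Set.mem_ofPred_eq, ← B.circ_zero, Equiv.symm_apply_apply]
    exact zero_mem _
  mul_mem' {g h} hg hh := by
    rw [Set.mem_ofPred_eq, B.circ_symm_mul]
    exact add_mem hh (smul_mem_torsionBy _ hg)
  inv_mem' {g} hg := by
    rw [Set.mem_ofPred_eq, B.circ_symm_inv]
    exact neg_mem (smul_mem_torsionBy _ hg)

theorem circ_mem_torsionSubgroup {k : ℤ} {a : A} :
    B.circ a ∈ B.torsionSubgroup k ↔ a ∈ torsionBy A k := by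
  change B.circ.symm (B.circ a) ∈ torsionBy A k ↔ _
  rw [Equiv.symm_apply_apply]

theorem card_torsionSubgroup (k : ℤ) : Nat.card (B.torsionSubgroup k) = Nat.card (torsionBy A k) :=
  Nat.card_congr (B.circ.subtypeEquiv fun _ => B.circ_mem_torsionSubgroup.symm).symm

theorem smul_apply_eq_of_forall_smul_circ_symm_eq [Finite X] [IsPretransitive G X] {Z : Type*}
    [MulAction G Z] {f : X → Z} (hf : ∀ (g : G) x, f (g • x) = g • f x) {P : Subgroup G}
    (htrans : ∀ x y, ∃ g ∈ P, g • f x = f y)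
    (hP : ∀ g ∈ P, ∀ g' ∈ P, B.circ (g • B.circ.symm g') ∈ P) {k : ℤ}
    (hk : (Nat.card (B.torsionSubgroup k)).Coprime (Nat.card X)) {q : G}
    (hq : q ∈ B.torsionSubgroup k) (hqP : ∀ g ∈ P, q • B.circ.symm g = B.circ.symm g) (x : X) :
    q • f x = f x := by
  let N := B.torsionSubgroup k ⊓ fixingSubgroup G (B.circ.symm '' P)
  have hN : ∀ {h}, h ∈ N ↔ h ∈ B.torsionSubgroup k ∧
      ∀ g ∈ P, h • B.circ.symm g = B.circ.symm g := fun {h} => by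
    rw [Subgroup.mem_inf, mem_fixingSubgroup_iff, Set.forall_mem_image]
    rfl
  refine smul_apply_eq_of_forall_exists_smul_smul_eq hf (N := N) htrans
    (fun g hg h hh => ⟨g * h * g⁻¹, hN.mpr ⟨?_, fun g' hg' => ?_⟩, fun y => ?_⟩)
    (hk.coprime_dvd_left (Subgroup.card_dvd_of_le inf_le_left)) (hN.mpr ⟨hq, hqP⟩) x
  · obtain ⟨a, rfl⟩ := B.circ.surjective g
    obtain ⟨b, rfl⟩ := B.circ.surjective h
    have hb := (hN.mp hh).2 _ hg
    rw [Equiv.symm_apply_apply] at hb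
    rw [B.circ_mul_circ_of_smul_eq hb, mul_inv_cancel_right]
    exact B.circ_mem_torsionSubgroup.mpr
      (smul_mem_torsionBy _ (B.circ_mem_torsionSubgroup.mp (hN.mp hh).1))
  · have hfix := (hN.mp hh).2 _ (hP g⁻¹ (inv_mem hg) g' hg')
    rw [Equiv.symm_apply_apply] at hfix
    rw [mul_smul, mul_smul, hfix, smul_inv_smul]
  · rw [smul_smul, inv_mul_cancel_right, mul_smul]

/-- The sub-brace of `k`-torsion elements. Its cycle base is the projection of `ι` by an
integer `e` that induces a retraction of `A` onto the `k`-torsion. -/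
def restrict (k e : ℤ) (he : ∀ a : A, e • a ∈ torsionBy A k)
    (hek : ∀ a ∈ torsionBy A k, e • a = a) :
    CycleBase (B.torsionSubgroup k) (torsionBy A k) X where
  circ := B.circ.subtypeEquiv fun _ => B.circ_mem_torsionSubgroup.symm
  circ_add a b := Subtype.ext (B.circ_add a b)
  ι x := ⟨e • B.ι x, he _⟩
  smul_ι g x := Subtype.ext (by
    change g.1 • e • B.ι x = e • B.ι (g.1 • x)
    rw [smul_comm, B.smul_ι])
  closure_range_ι := by
    let π : A →+ torsionBy A k := (zsmulAddGroupHom e).codRestrict _ he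
    have hπ : Function.Surjective π := fun a => ⟨a, Subtype.ext (hek a a.2)⟩
    rw [show (fun x => (⟨e • B.ι x, he _⟩ : torsionBy A k)) = π ∘ B.ι from rfl, Set.range_comp,
      ← AddMonoidHom.map_closure, B.closure_range_ι, ← AddMonoidHom.range_eq_map,
      AddMonoidHom.range_eq_top_of_surjective π hπ]

end CycleBase

namespace CycleSet

section Brace

variable {X : Type*} (C : CycleSet X)

/-- The generators `σ_x` as elements of the permutation group. -/
noncomputable def permSigma (x : X) : C.permGroup :=
  ⟨C.sigma x, C.sigma_mem_permGroup x⟩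

theorem permSigma_smul (x y : X) : C.permSigma x • y = C.op x y := rfl

theorem submonoid_closure_range_permSigma [Finite X] :
    Submonoid.closure (Set.range C.permSigma) = ⊤ := by
  have : Finite C.permGroup := Subtype.finite
  have hpre : Set.range C.permSigma = (↑) ⁻¹' Set.range C.sigma :=
    Set.ext fun g => exists_congr fun x => Subtype.ext_iff
  rw [← Subgroup.closure_toSubmonoid_of_finite, hpre, permGroup,
    Subgroup.closure_closure_coe_preimage, Subgroup.top_toSubmonoid]

theorem permSigma_mul_permSigma (x y : X) (g : C.permGroup) :
    C.permSigma ((C.permSigma (g • y) * g) • x) * (C.permSigma (g • y) * g) =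
      C.permSigma ((C.permSigma (g • x) * g) • y) * (C.permSigma (g • x) * g) :=
  Subtype.ext (Equiv.ext fun z => C.c1 (g • y) (g • x) (g • z))

/-- The value in the permutation group of a formal sum of elements of the cycle set; it is
determined by `circ (a + b) = circ (circ a • b) * circ a`. -/
noncomputable def evalMultiset (s : Multiset X) : C.permGroup :=
  have : LeftCommutative fun (x : X) (g : C.permGroup) => C.permSigma (g • x) * g :=
    ⟨C.permSigma_mul_permSigma⟩
  s.foldr (fun x g => C.permSigma (g • x) * g) 1

theorem evalMultiset_zero : C.evalMultiset 0 = 1 := rfl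

theorem evalMultiset_cons (x : X) (s : Multiset X) :
    C.evalMultiset (x ::ₘ s) = C.permSigma (C.evalMultiset s • x) * C.evalMultiset s :=
  have : LeftCommutative fun (x : X) (g : C.permGroup) => C.permSigma (g • x) * g :=
    ⟨C.permSigma_mul_permSigma⟩
  Multiset.foldr_cons _ _ _ _

theorem evalMultiset_singleton (x : X) : C.evalMultiset {x} = C.permSigma x := by
  rw [← Multiset.cons_zero, evalMultiset_cons, evalMultiset_zero, one_smul, mul_one]

theorem evalMultiset_add (s t : Multiset X) :
    C.evalMultiset (s + t) =
      C.evalMultiset (t.map (C.evalMultiset s • ·)) * C.evalMultiset s := by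
  induction t using Multiset.induction_on with
  | empty => rw [add_zero, Multiset.map_zero, evalMultiset_zero, one_mul]
  | cons x t ih =>
    rw [Multiset.add_cons, evalMultiset_cons, ih, Multiset.map_cons, evalMultiset_cons, mul_assoc,
      mul_smul]

theorem evalMultiset_surjective [Finite X] : Function.Surjective C.evalMultiset := by
  intro g
  have hg : g ∈ Submonoid.closure (Set.range C.permSigma) :=
    C.submonoid_closure_range_permSigma ▸ Submonoid.mem_top g
  induction hg using Submonoid.closure_induction_left with
  | one => exact ⟨0, C.evalMultiset_zero⟩
  | mul_left _ hx _ _ ih =>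
    obtain ⟨x, rfl⟩ := hx
    obtain ⟨s, rfl⟩ := ih
    exact ⟨(C.evalMultiset s)⁻¹ • x ::ₘ s, by rw [evalMultiset_cons, smul_inv_smul]⟩

theorem evalMultiset_map_smul_congr [Finite X] (g : C.permGroup) {t t' : Multiset X}
    (h : C.evalMultiset t = C.evalMultiset t') :
    C.evalMultiset (t.map (g • ·)) = C.evalMultiset (t'.map (g • ·)) := by
  obtain ⟨s, rfl⟩ := C.evalMultiset_surjective g
  refine mul_right_cancel (b := C.evalMultiset s) ?_
  rw [← evalMultiset_add, ← evalMultiset_add, add_comm s, add_comm s, evalMultiset_add, h,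
    ← evalMultiset_add]

theorem evalMultiset_add_left_cancel [Finite X] {s t t' : Multiset X}
    (h : C.evalMultiset (s + t) = C.evalMultiset (s + t')) :
    C.evalMultiset t = C.evalMultiset t' := by
  rw [evalMultiset_add, evalMultiset_add] at h
  simpa using C.evalMultiset_map_smul_congr (C.evalMultiset s)⁻¹ (mul_right_cancel h)

/-- The additive congruence whose quotient is the additive group of the brace on the permutation
group. -/
noncomputable def evalCon : AddCon (Multiset X) where
  toSetoid := Setoid.ker C.evalMultiset
  add' {s s' t t'} hs ht := by
    change C.evalMultiset (s + t) = C.evalMultiset (s' + t')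
    rw [evalMultiset_add, Setoid.ker_def.mp hs, ← evalMultiset_add, add_comm, evalMultiset_add,
      Setoid.ker_def.mp ht, ← evalMultiset_add, add_comm]

variable [Finite X]

/-- The bijection of the quotient by `evalCon` with the permutation group. -/
noncomputable def evalEquiv : C.evalCon.Quotient ≃ C.permGroup :=
  Setoid.quotientKerEquivOfSurjective C.evalMultiset C.evalMultiset_surjective

/-- The additive group of the brace. -/
noncomputable instance evalAddCommGroup : AddCommGroup C.evalCon.Quotient :=
  have : Finite C.evalCon.Quotient := Finite.of_equiv _ C.evalEquiv.symm
  letI : AddLeftCancelMonoid C.evalCon.Quotient :=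
    { (inferInstance : AddCommMonoid C.evalCon.Quotient) with
      add_left_cancel := by
        rintro ⟨s⟩ ⟨t⟩ ⟨t'⟩ h
        exact Quotient.sound (C.evalMultiset_add_left_cancel (Quotient.exact h)) }
  { AddLeftCancelMonoid.addGroupOfFinite with
    add_comm := (inferInstance : AddCommMonoid C.evalCon.Quotient).add_comm }

/-- The action of the permutation group on the additive group of the brace, extending that on
the cycle set. -/
noncomputable instance evalDistribMulAction :
    DistribMulAction C.permGroup C.evalCon.Quotient where
  smul g := Quotient.map (Multiset.map (g • ·)) fun _ _ => C.evalMultiset_map_smul_congr g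
  one_smul := by
    rintro ⟨s⟩
    exact congrArg (Quotient.mk _) ((Multiset.map_congr rfl fun x _ => one_smul _ x).trans
      s.map_id)
  mul_smul := by
    rintro g h ⟨s⟩
    exact congrArg (Quotient.mk _) ((Multiset.map_congr rfl fun x _ => mul_smul g h x).trans
      (Multiset.map_map (g • ·) (h • ·) s).symm)
  smul_zero _ := rfl
  smul_add := by
    rintro g ⟨s⟩ ⟨t⟩
    exact congrArg (Quotient.mk _) (Multiset.map_add _ s t)

/-- The brace structure on the permutation group, with the cycle set itself as a cycle base. -/
noncomputable def cycleBase : CycleBase C.permGroup C.evalCon.Quotient X where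
  circ := C.evalEquiv
  circ_add := by
    rintro ⟨s⟩ ⟨t⟩
    exact C.evalMultiset_add s t
  ι x := (({x} : Multiset X) : C.evalCon.Quotient)
  smul_ι _ _ := rfl
  closure_range_ι := by
    rw [eq_top_iff]
    rintro ⟨s⟩ -
    induction s using Multiset.induction_on with
    | empty => exact zero_mem _
    | cons x s ih =>
      rw [← Multiset.singleton_add]
      exact add_mem (S := AddSubgroup C.evalCon.Quotient)
        (AddSubgroup.subset_closure (Set.mem_range_self x)) ih

theorem cycleBase_circ_ι (x : X) : C.cycleBase.circ (C.cycleBase.ι x) = C.permSigma x :=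
  C.evalMultiset_singleton x

theorem cycleBase_ι_injective (hC : C.Irretractable) : Function.Injective C.cycleBase.ι := by
  intro x y hxy
  refine hC x y (funext fun z => ?_)
  rw [← permSigma_smul, ← permSigma_smul, ← cycleBase_circ_ι, ← cycleBase_circ_ι, hxy]

end Brace

end CycleSet

section SkewProducts

variable {p : ℕ}

/-- The operation `(a, x) · (b, y) = (b + s a x, y + f a x b)` on `ZMod p × ZMod p`, whose left
multiplications are skew products of translations, satisfies C1 and is irretractable. -/
structure IsSkewCycleSet (s : ZMod p → ZMod p → ZMod p) (f : ZMod p → ZMod p → ZMod p → ZMod p) :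
    Prop where
  injective : ∀ a x a' x', s a x = s a' x' → (∀ b, f a x b = f a' x' b) → a = a' ∧ x = x'
  c1_fst : ∀ a x b y,
    s (b + s a x) (y + f a x b) + s a x = s (a + s b y) (x + f b y a) + s b y
  c1_snd : ∀ a x b y c,
    f (b + s a x) (y + f a x b) (c + s a x) + f a x c =
      f (a + s b y) (x + f b y a) (c + s b y) + f b y c

/-- The map `(b, y) ↦ (b, y + n b)` is an automorphism of the operation defined by `s`
and `f`. -/
structure IsVerticalAut (s : ZMod p → ZMod p → ZMod p) (f : ZMod p → ZMod p → ZMod p → ZMod p)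
    (n : ZMod p → ZMod p) : Prop where
  map_fst : ∀ a x, s a (x + n a) = s a x
  map_snd : ∀ a x b, f a (x + n a) b = f a x b + (n (b + s a x) - n b)

variable [Fact p.Prime]

theorem div_add_eq_one_of_const {n : ZMod p → ZMod p} (hn : ∀ a, n a ≠ 0) {t r : ZMod p}
    (h : ∀ a, n a / n (a + t) = r) : r = 1 := by
  have hpow : ∀ k : ℕ, n 0 = r ^ k * n (k * t) := fun k => by
    induction k with
    | zero => simp
    | succ k ih =>
      rw [ih, (div_eq_iff (hn _)).mp (h (k * t)), pow_succ, mul_assoc, Nat.cast_succ, add_one_mul]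
  have hp := hpow p
  rw [CharP.cast_eq_zero, zero_mul, ZMod.pow_card] at hp
  exact mul_right_cancel₀ (hn 0) (by rw [← hp, one_mul])

theorem add_eq_of_forall_mul_div_add_div_sub_one {n : ZMod p → ZMod p} (hn : ∀ a, n a ≠ 0)
    {t : ZMod p}
    (h : ∀ a b c, (n (c + t + t) - n (c + t)) * (n a / n (a + t) + n b / n (b + t) - 1) =
      n (c + t) - n c) (c : ZMod p) : n (c + t) = n c := by
  by_contra hc
  have hne : n (c + t + t) - n (c + t) ≠ 0 := fun h0 =>
    hc (sub_eq_zero.mp (by rw [← h 0 0 c, h0, zero_mul]))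
  have hconst : ∀ a, n a / n (a + t) = n 0 / n (0 + t) := fun a => by
    linear_combination mul_left_cancel₀ hne ((h a 0 c).trans (h 0 0 c).symm)
  have hone := hconst c
  rw [div_add_eq_one_of_const hn hconst, div_eq_one_iff_eq (hn _)] at hone
  exact hc hone.symm

variable {s : ZMod p → ZMod p → ZMod p} {f : ZMod p → ZMod p → ZMod p → ZMod p}
  {n : ZMod p → ZMod p}

theorem IsVerticalAut.shift_eq_zero_of_apply_eq_zero (hn : IsVerticalAut s f n)
    {a₀ : ZMod p} (h₀ : n a₀ ≠ 0) {a : ZMod p} (h : n a = 0) (x : ZMod p) : s a x = 0 := by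
  by_contra hs
  refine h₀ ((eq_of_periodic_zmod (fun b => ?_) hs a₀ a).trans h)
  have hb := hn.map_snd a x b
  rw [h, add_zero, left_eq_add, sub_eq_zero] at hb
  exact hb

namespace IsSkewCycleSet

theorem apply_eq_zero_of_shift_eq_zero (hs : IsSkewCycleSet s f) (hn : IsVerticalAut s f n)
    {a x : ZMod p} (h : s a x = 0) : n a = 0 := by
  have hx := (hs.injective a (x + n a) a x (hn.map_fst a x) fun b => by
    rw [hn.map_snd, h, add_zero, sub_self, add_zero]).2
  rwa [add_eq_left] at hx

theorem shift_eq (hs : IsSkewCycleSet s f) (hn : IsVerticalAut s f n) {a₀ : ZMod p}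
    (h₀ : n a₀ ≠ 0) (a x : ZMod p) : s a x = s 0 0 := by
  have hfibre : ∀ a x y, s a x = s a y := fun a x y => by
    by_cases h : n a = 0
    · rw [hn.shift_eq_zero_of_apply_eq_zero h₀ h, hn.shift_eq_zero_of_apply_eq_zero h₀ h]
    · exact eq_of_periodic_zmod (hn.map_fst a) h x y
  rw [hfibre a x 0]
  refine apply_eq_of_shift_identity (G := fun a _ => s a 0) (fun x y _ _ => ?_) a 0 0
  have h := hs.c1_fst x 0 y 0
  rwa [hfibre _ (0 + _) 0, hfibre _ (0 + _) 0] at h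

theorem apply_add_shift (hs : IsSkewCycleSet s f) (hn : IsVerticalAut s f n) {t : ZMod p}
    (ht : ∀ a x, s a x = t) (hne : ∀ a, n a ≠ 0) (c : ZMod p) : n (c + t) = n c := by
  refine add_eq_of_forall_mul_div_add_div_sub_one hne (fun a b c => ?_) c
  have haff : ∀ a x b, f a x b = f a 0 b + (n (b + t) - n b) / n a * x := fun a x b =>
    eq_add_div_mul_of_add_eq (f := fun x => f a x b) (hne a)
      (fun x => by simp only [hn.map_snd, ht]) x
  have h₁ := hs.c1_snd a 1 b 0 c
  have h₀ := hs.c1_snd a 0 b 0 c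
  simp only [ht] at h₁ h₀
  rw [haff (b + t), haff a 1 b, haff a 1 c, haff (a + t)] at h₁
  rw [haff (b + t), haff (a + t)] at h₀
  have h₂ : (n (c + t + t) - n (c + t)) / n (b + t) * ((n (b + t) - n b) / n a) +
      (n (c + t) - n c) / n a = (n (c + t + t) - n (c + t)) / n (a + t) := by
    linear_combination h₁ - h₀
  have ha := hne a
  have hat := hne (a + t)
  have hbt := hne (b + t)
  field_simp at h₂ ⊢
  linear_combination -h₂

theorem eq_zero_of_isVerticalAut (hs : IsSkewCycleSet s f) (hn : IsVerticalAut s f n)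
    (a₀ : ZMod p) : n a₀ = 0 := by
  by_contra h₀
  have ht := hs.shift_eq hn h₀
  have ht₀ : s 0 0 ≠ 0 := fun h => h₀ (hs.apply_eq_zero_of_shift_eq_zero hn ((ht a₀ 0).trans h))
  have hne : ∀ a, n a ≠ 0 := fun a h => ht₀ (ht a 0 ▸ hn.shift_eq_zero_of_apply_eq_zero h₀ h 0)
  have hper := hs.apply_add_shift hn ht hne
  refine hne 0 (add_eq_left.mp (hs.injective 0 (0 + n 0) 0 0 (hn.map_fst 0 0) fun b => ?_).2)
  rw [hn.map_snd, ht, hper, sub_self, add_zero]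

theorem exists_eq_of_equivariant {s : ZMod p → ZMod p} {g : ZMod p → ZMod p → ZMod p}
    (h : IsSkewCycleSet (fun _ x => s x) fun a x b => g x (b - a)) :
    ∃ (Φ : ZMod p → ZMod p) (μ ν : ZMod p), μ ≠ 0 ∧ (∀ x k, g x k = Φ k) ∧
      (∀ x, s x = μ * x + ν) ∧ (∀ k, Φ (-k) = Φ k) ∧ ∃ i j, Φ i ≠ Φ j := by
  have hg : ∀ x k, g x k = g 0 k := fun x k =>
    apply_eq_of_shift_identity (fun x y A B => by
      have := h.c1_snd (-A) x (-B) y 0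
      ring_nf at this ⊢
      exact this) x 0 k
  have hinj : ∀ x y, s x = s y → x = y := fun x y hxy =>
    (h.injective 0 x 0 y hxy fun b => by rw [hg x, hg y]).2
  have hnonconst : ∃ i j, g 0 i ≠ g 0 j := by
    by_contra! hcon
    exact zero_ne_one (h.injective 0 0 1 0 rfl fun b => hcon _ _).1
  have hcomm : ∀ x y k, s (y + g 0 k) + s x = s (x + g 0 (-k)) + s y := fun x y k => by
    simpa [hg x, hg y] using h.c1_fst 0 x k y
  obtain ⟨k, hk⟩ : ∃ k, g 0 k ≠ 0 := by
    obtain ⟨i, j, hij⟩ := hnonconst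
    by_contra! hcon
    exact hij (by rw [hcon, hcon])
  have haff := eq_add_div_mul_of_add_eq (f := s) (d := s (0 + g 0 (-k)) - s 0) hk fun y => by
    linear_combination hcomm 0 y k
  refine ⟨g 0, _, s 0, fun hμ => zero_ne_one (α := ZMod p) (hinj 0 1 ?_), hg,
    fun x => (haff x).trans (add_comm _ _), fun k => ?_, hnonconst⟩
  · rw [haff 1, hμ, zero_mul, add_zero]
  · exact add_left_cancel (hinj _ _ (add_right_cancel (hcomm 0 0 k))).symm

end IsSkewCycleSet

end SkewProducts

namespace CycleBase

variable {p : ℕ} {G A X : Type*} [Group G] [AddCommGroup A] [DistribMulAction G A]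
  [MulAction G X] (B : CycleBase G A X)

theorem circ_nsmul {n : A} (hn : ∀ g : G, g • n = n) (k : ℕ) : B.circ (k • n) = B.circ n ^ k := by
  induction k with
  | zero => rw [zero_nsmul, circ_zero, pow_zero]
  | succ k ih => rw [succ_nsmul, circ_add, hn, ih, pow_succ']

theorem circ_ι_smul_circ_ι_smul (u v w : X) :
    B.circ (B.ι (B.circ (B.ι u) • v)) • B.circ (B.ι u) • w =
      B.circ (B.ι (B.circ (B.ι v) • u)) • B.circ (B.ι v) • w := by
  rw [smul_smul, smul_smul, ← smul_ι, ← smul_ι, circ_smul_mul_circ]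

theorem circ_ι_circ_smul_smul {n : A} (hn : ∀ g : G, g • n = n) (u w : X) :
    B.circ (B.ι (B.circ n • u)) • B.circ n • w = B.circ n • B.circ (B.ι u) • w := by
  rw [smul_smul, smul_smul, ← smul_ι, circ_smul_mul_circ, hn]

theorem exists_smul_eq_and_map_circ_eq_ofAdd_one [Fact p.Prime] [Finite G] (hG : IsPGroup p G)
    {s : G →* Multiplicative (ZMod p)} (hs : Function.Surjective s)
    (hs₀ : ∀ n : A, (∀ g : G, g • n = n) → s (B.circ n) = 1 → n = 0) :
    ∃ n : A, (∀ g : G, g • n = n) ∧ s (B.circ n) = Multiplicative.ofAdd 1 ∧ B.circ n ^ p = 1 := by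
  have : Finite A := Finite.of_equiv _ B.circ.symm
  have hdvd : p ∣ Nat.card A := by
    rw [Nat.card_congr B.circ, ← Nat.card_zmod p, ← Nat.card_congr Multiplicative.toAdd]
    exact Subgroup.card_dvd_of_surjective s hs
  obtain ⟨n, hn, hne⟩ := hG.exists_fixed_point_of_prime_dvd_card_of_fixed_point A hdvd
    (a := 0) (fun g => smul_zero g)
  have hk : ∀ k : ℕ, (∀ g : G, g • k • n = k • n) ∧
      s (B.circ (k • n)) = Multiplicative.ofAdd (k * (s (B.circ n)).toAdd) := fun k =>
    ⟨fun g => by rw [smul_comm, hn], by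
      rw [B.circ_nsmul hn, map_pow, ← nsmul_eq_mul, ofAdd_nsmul, ofAdd_toAdd]⟩
  have hsn : (s (B.circ n)).toAdd ≠ 0 := fun h => hne (hs₀ n hn h).symm
  obtain ⟨k, hk₁⟩ : ∃ k : ℕ, s (B.circ (k • n)) = Multiplicative.ofAdd 1 :=
    ⟨(s (B.circ n)).toAdd⁻¹.val, by
      rw [(hk _).2, ZMod.natCast_zmod_val, inv_mul_cancel₀ hsn]⟩
  refine ⟨k • n, (hk k).1, hk₁, ?_⟩
  rw [← B.circ_nsmul (hk k).1, smul_comm, hs₀ (p • n) (hk p).1, smul_zero, circ_zero]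
  rw [(hk p).2, CharP.cast_eq_zero, zero_mul, ofAdd_zero]

theorem ext_of_smul_eq [FaithfulSMul G X] {a b : A} (E : ZMod p × ZMod p ≃ X)
    (h : ∀ c v, B.circ a • E (c, v) = B.circ b • E (c, v)) : a = b :=
  B.circ.injective (eq_of_smul_eq_smul fun x : X => by
    obtain ⟨w, rfl⟩ := E.surjective x
    exact h w.1 w.2)

section PGroup

variable [FaithfulSMul G X]

theorem exists_isSkewCycleSet (hι : Function.Injective B.ι) {s : G →* Multiplicative (ZMod p)}
    {E : ZMod p × ZMod p ≃ X}
    (hE : ∀ g : G, ∃ f : ZMod p → ZMod p, ∀ b y, g • E (b, y) = E (b + (s g).toAdd, y + f b)) :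
    ∃ f : ZMod p → ZMod p → ZMod p → ZMod p,
      (∀ a x b y, B.circ (B.ι (E (a, x))) • E (b, y) =
        E (b + (s (B.circ (B.ι (E (a, x))))).toAdd, y + f a x b)) ∧
      IsSkewCycleSet (fun a x => (s (B.circ (B.ι (E (a, x))))).toAdd) f := by
  choose f hf using fun a x => hE (B.circ (B.ι (E (a, x))))
  have hc1 := fun a x b y c => B.circ_ι_smul_circ_ι_smul (E (a, x)) (E (b, y)) (E (c, 0))
  simp only [hf, E.apply_eq_iff_eq, Prod.mk.injEq] at hc1
  refine ⟨f, hf, fun a x a' x' hs hff => ?_, fun a x b y => ?_, fun a x b y c => ?_⟩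
  · rw [← Prod.mk.injEq, ← E.apply_eq_iff_eq]
    refine hι (B.ext_of_smul_eq E fun c v => ?_)
    rw [hf, hf, hs, hff]
  · linear_combination (hc1 a x b y 0).1
  · linear_combination (hc1 a x b y c).2

variable [Fact p.Prime]

theorem eq_zero_of_map_circ_eq_one (hι : Function.Injective B.ι)
    {s : G →* Multiplicative (ZMod p)} {E : ZMod p × ZMod p ≃ X}
    (hE : ∀ g : G, ∃ f : ZMod p → ZMod p, ∀ b y, g • E (b, y) = E (b + (s g).toAdd, y + f b))
    {n : A} (hn : ∀ g : G, g • n = n) (hsn : s (B.circ n) = 1) : n = 0 := by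
  obtain ⟨f, hf, hs⟩ := B.exists_isSkewCycleSet hι hE
  obtain ⟨m, hm⟩ := hE (B.circ n)
  simp only [hsn, toAdd_one, add_zero] at hm
  have hcomm := fun a x b => B.circ_ι_circ_smul_smul hn (E (a, x)) (E (b, 0))
  simp only [hf, hm, E.apply_eq_iff_eq, Prod.mk.injEq] at hcomm
  have hm₀ := hs.eq_zero_of_isVerticalAut (n := m)
    ⟨fun a x => add_left_cancel (hcomm a x 0).1, fun a x b => by
      linear_combination (hcomm a x b).2⟩
  refine B.ext_of_smul_eq E fun b y => ?_
  rw [hm, hm₀, add_zero, circ_zero, one_smul]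

end PGroup

/-- Coordinates on the cycle base in which `circ ∘ ι` is the cycle set with parameters `Φ` and
`1`, and a fixed element `n` of the brace translates the first coordinate. -/
structure IsNormalForm (n : A) (E : ZMod p × ZMod p ≃ X) (Φ : ZMod p → ZMod p) : Prop where
  smul_eq : ∀ g : G, g • n = n
  circ_smul : ∀ b y, B.circ n • E (b, y) = E (b + 1, y)
  circ_ι_smul : ∀ a x b y, B.circ (B.ι (E (a, x))) • E (b, y) = E (b + x, y + Φ (b - a))
  isAdmissible : CycleSet.IsAdmissible Φ 1

variable [Fact p.Prime] [FaithfulSMul G X]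

theorem exists_isSkewCycleSet_equivariant (hι : Function.Injective B.ι)
    {s : G →* Multiplicative (ZMod p)} {E : ZMod p × ZMod p ≃ X}
    (hE : ∀ g : G, ∃ f : ZMod p → ZMod p, ∀ b y, g • E (b, y) = E (b + (s g).toAdd, y + f b))
    {n : A} (hn : ∀ g : G, g • n = n) (hnE : ∀ b y, B.circ n • E (b, y) = E (b + 1, y)) :
    ∃ (t : ZMod p → ZMod p) (f : ZMod p → ZMod p → ZMod p),
      (∀ a x b y, B.circ (B.ι (E (a, x))) • E (b, y) = E (b + t x, y + f x (b - a))) ∧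
      IsSkewCycleSet (fun _ x => t x) fun a x b => f x (b - a) := by
  obtain ⟨f, hf, hs⟩ := B.exists_isSkewCycleSet hι hE
  set t := fun a x => (s (B.circ (B.ι (E (a, x))))).toAdd
  have hcomm := fun a x b => B.circ_ι_circ_smul_smul hn (E (a, x)) (E (b, 0))
  simp only [hf, hnE, E.apply_eq_iff_eq, Prod.mk.injEq] at hcomm
  have ht : t = fun _ x => t 0 x := funext₂ fun a x =>
    eq_of_periodic_zmod (f := fun a => t a x)
      (fun a => by linear_combination (hcomm a x 0).1) one_ne_zero a 0
  have hff : f = fun a x b => f 0 x (b - a) := funext₃ fun a x b => by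
    have h := eq_of_periodic_zmod (f := fun a' => f a' x (b - a + a'))
      (fun a' => by
        have h' := (hcomm a' x (b - a + a')).2
        rw [zero_add, zero_add, add_assoc] at h'
        exact h') one_ne_zero a 0
    simpa only [sub_add_cancel, add_zero] using h
  refine ⟨t 0, f 0, fun a x b y => ?_, ht ▸ hff ▸ hs⟩
  rw [hf]
  congr 3
  · exact congrFun₂ ht a x
  · exact congrFun (congrFun₂ hff a x) b

theorem exists_isNormalForm [Finite G] [MulAction.IsPretransitive G X] (hG : IsPGroup p G)
    (hX : Nat.card X = p ^ 2) (hι : Function.Injective B.ι) :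
    ∃ n E Φ, B.IsNormalForm (p := p) n E Φ := by
  obtain ⟨s, hs, hcoord⟩ := exists_coordinates hG hX
  obtain ⟨τ, hτ⟩ := hs (Multiplicative.ofAdd 1)
  obtain ⟨E₀, hE₀, -⟩ := hcoord τ hτ
  obtain ⟨n, hn, hsn, hnp⟩ := B.exists_smul_eq_and_map_circ_eq_ofAdd_one hG hs
    fun n => B.eq_zero_of_map_circ_eq_one hι hE₀
  obtain ⟨E, hE, hnE⟩ := hcoord (B.circ n) hsn
  obtain ⟨t, f, hf, hskew⟩ := B.exists_isSkewCycleSet_equivariant hι hE hn (hnE hnp)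
  obtain ⟨Φ, μ, ν, hμ, hΦ, ht, heven, i, j, hij⟩ := hskew.exists_eq_of_equivariant
  let ψ : ZMod p ≃ ZMod p := (Equiv.addRight (-ν)).trans (Equiv.divRight₀ μ hμ)
  have hψ : ∀ y, (((Equiv.refl _).prodCongr ψ).trans E) y = E (y.1, (y.2 + -ν) / μ) :=
    fun _ => rfl
  refine ⟨n, ((Equiv.refl _).prodCongr ψ).trans E, fun k => μ * Φ k, hn, fun b y => ?_,
    fun a x b y => ?_, ⟨⟨i, j, fun h => hij (mul_left_cancel₀ hμ h)⟩, fun k => by rw [heven],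
      one_ne_zero, fun k => by rw [one_mul, one_mul]⟩⟩
  · simp only [hψ, hnE hnp]
  · simp only [hψ, hf, hΦ, ht]
    congr 2 <;> field_simp <;> ring

end CycleBase

section PrimarySplitting

open AddSubgroup

/-- The finite abelian group `A` is the direct sum of its `p`-primary part, of order `k`, and of a
group of order `l` prime to `p`; multiplication by `e` is the projection to the former. -/
structure IsPrimarySplitting (A : Type*) [AddCommGroup A] (p k l : ℕ) (e : ℤ) : Prop where
  exists_eq_pow : ∃ v, k = p ^ v
  coprime : p.Coprime l
  card_eq : Nat.card A = k * l
  zsmul_mem : ∀ a : A, e • a ∈ torsionBy A k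
  sub_zsmul_mem : ∀ a : A, a - e • a ∈ torsionBy A l
  zsmul_eq : ∀ a ∈ torsionBy A (k : ℤ), e • a = a
  zsmul_eq_zero : ∀ a ∈ torsionBy A (l : ℤ), e • a = 0

variable {A : Type*} [AddCommGroup A] {p k l : ℕ} {e : ℤ}

theorem exists_isPrimarySplitting (A : Type*) [AddCommGroup A] [Finite A] (hp : p.Prime) :
    ∃ k l e, IsPrimarySplitting A p k l e := by
  obtain ⟨v, l, hl, hA⟩ := Nat.exists_eq_pow_mul_and_not_dvd (Nat.card_pos (α := A)).ne' p
    hp.ne_one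
  have hpl : p.Coprime l := (Nat.Prime.coprime_iff_not_dvd hp).mpr hl
  obtain ⟨e, he, hek, hel⟩ := exists_zsmul_projection (hpl.pow_left v) hA
  exact ⟨_, l, e, ⟨v, rfl⟩, hpl, hA, fun a => (he a).1, fun a => (he a).2, hek, hel⟩

namespace IsPrimarySplitting

variable (D : IsPrimarySplitting A p k l e)
include D

theorem coprime_left_right : k.Coprime l := by
  obtain ⟨v, rfl⟩ := D.exists_eq_pow
  exact D.coprime.pow_left v

theorem eq_zero {a : A} (hk : a ∈ torsionBy A (k : ℤ)) (hl : a ∈ torsionBy A (l : ℤ)) : a = 0 := by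
  rw [← D.zsmul_eq a hk, D.zsmul_eq_zero a hl]

theorem card_torsionBy_left [Finite A] : Nat.card (torsionBy A (k : ℤ)) = k :=
  card_torsionBy D.coprime_left_right D.card_eq

theorem card_torsionBy_right [Finite A] : Nat.card (torsionBy A (l : ℤ)) = l :=
  card_torsionBy D.coprime_left_right.symm (D.card_eq.trans (mul_comm k l))

end IsPrimarySplitting

end PrimarySplitting

namespace CycleBase

open AddSubgroup MulAction

section Splitting

variable {p k l : ℕ} {e : ℤ} {G A X : Type*} [Group G] [AddCommGroup A] [DistribMulAction G A]
  [MulAction G X] (B : CycleBase G A X)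

/-- The component of the cycle base in the complement of the `p`-primary part. -/
def coι (e : ℤ) (x : X) : A :=
  B.ι x - e • B.ι x

theorem smul_zsmul_ι (e : ℤ) (g : G) (x : X) : g • e • B.ι x = e • B.ι (g • x) := by
  rw [smul_comm, B.smul_ι]

theorem smul_coι (g : G) (x : X) : g • B.coι e x = B.coι e (g • x) := by
  rw [coι, smul_sub, B.smul_ι, smul_zsmul_ι, coι]

variable (D : IsPrimarySplitting A p k l e)

/-- The `p`-primary component of a brace, with the projection of its cycle base. -/
abbrev primaryPart : CycleBase (B.torsionSubgroup k) (torsionBy A k) X :=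
  B.restrict k e D.zsmul_mem D.zsmul_eq

theorem smul_primaryPart_ι (g : G) (x : X) :
    g • (B.primaryPart D).ι x = (B.primaryPart D).ι (g • x) :=
  Subtype.ext (B.smul_zsmul_ι e g x)

variable [Finite A]
include D

theorem isPGroup_torsionSubgroup : IsPGroup p (B.torsionSubgroup k) := by
  obtain ⟨v, hv⟩ := D.exists_eq_pow
  exact IsPGroup.of_card (n := v) (by rw [card_torsionSubgroup, D.card_torsionBy_left, hv])

theorem card_torsionSubgroup_right : Nat.card (B.torsionSubgroup l) = l := by
  rw [card_torsionSubgroup, D.card_torsionBy_right]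

theorem isPretransitive_torsionSubgroup [Finite X] [IsPretransitive G X] {r : ℕ}
    (hX : Nat.card X = p ^ r) : IsPretransitive (B.torsionSubgroup k) X := by
  refine isPretransitive_of_index_coprime _ ?_
  have hk : 0 < k := D.card_torsionBy_left ▸ Nat.card_pos
  have hindex := (B.torsionSubgroup k).card_mul_index
  rw [card_torsionSubgroup, D.card_torsionBy_left, ← Nat.card_congr B.circ, D.card_eq] at hindex
  rw [Nat.eq_of_mul_eq_mul_left hk hindex, hX]
  exact (D.coprime.pow_left r).symm

theorem eq_one_of_forall_smul_primaryPart_ι [Finite X] [FaithfulSMul G X] [IsPretransitive G X]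
    {r : ℕ} (hX : Nat.card X = p ^ r) {q : G} (hq : q ∈ B.torsionSubgroup l)
    (hqι : ∀ x, q • (B.primaryPart D).ι x = (B.primaryPart D).ι x) : q = 1 := by
  have := B.isPretransitive_torsionSubgroup D hX
  have hqA : ∀ a ∈ torsionBy A (k : ℤ), q • a = a := fun a ha => by
    rw [← D.zsmul_eq a ha, B.zsmul_eq_of_smul_ι fun x => congrArg Subtype.val (hqι x)]
  refine eq_of_smul_eq_smul fun x : X => ?_
  rw [one_smul]
  refine B.smul_apply_eq_of_forall_smul_circ_symm_eq (f := id) (P := B.torsionSubgroup k)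
    (k := l) (fun _ _ => rfl) (fun x y =>
      (exists_smul_eq (B.torsionSubgroup k) x y).elim fun g hg => ⟨g, g.2, hg⟩)
    (fun g _ g' hg' => B.circ_mem_torsionSubgroup.mpr (smul_mem_torsionBy g hg')) ?_ hq
    (fun g hg => hqA _ hg) x
  rw [hX, B.card_torsionSubgroup_right D]
  exact (D.coprime.pow_left r).symm

theorem primaryPart_ι_injective_of_forall_smul_eq [Finite X] [FaithfulSMul G X]
    [IsPretransitive G X] (hι : Function.Injective B.ι) {r : ℕ} (hX : Nat.card X = p ^ r)
    (h : ∀ q ∈ B.torsionSubgroup l, ∀ x, q • (B.primaryPart D).ι x = (B.primaryPart D).ι x) :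
    Function.Injective (B.primaryPart D).ι := by
  have heq : ∀ x, (B.primaryPart D).ι x = B.ι x := fun x => by
    have hmem : B.circ (B.coι e x) ∈ B.torsionSubgroup l :=
      B.circ_mem_torsionSubgroup.mpr (D.sub_zsmul_mem _)
    have hone := B.eq_one_of_forall_smul_primaryPart_ι D hX hmem (h _ hmem)
    rw [← B.circ_zero, B.circ.apply_eq_iff_eq, coι, sub_eq_zero] at hone
    exact hone.symm
  exact fun x y hxy => hι (by rw [← heq, ← heq, hxy])

end Splitting

section ConstantHomomorphisms

variable {G A X M : Type*} [Group G] [AddCommGroup A] [DistribMulAction G A] [MulAction G X]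
  [CommGroup M] (B : CycleBase G A X) {s : G →* M}

theorem map_circ_smul (hs : ∀ x y, s (B.circ (B.ι x)) = s (B.circ (B.ι y))) (g : G) (a : A) :
    s (B.circ (g • a)) = s (B.circ a) := by
  have ha : a ∈ AddSubgroup.closure (Set.range B.ι) := B.closure_range_ι ▸ mem_top a
  induction ha using AddSubgroup.closure_induction generalizing g with
  | mem a ha =>
    obtain ⟨x, rfl⟩ := ha
    rw [smul_ι, hs]
  | zero => rw [smul_zero]
  | add a b _ _ ha hb =>
    rw [smul_add, circ_add, circ_add, map_mul, map_mul, smul_smul, hb, hb, ha]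
  | neg a _ ha =>
    have hneg : ∀ b : A, s (B.circ (-b)) = (s (B.circ (B.circ (-b) • b)))⁻¹ := fun b => by
      rw [eq_inv_iff_mul_eq_one, mul_comm, ← map_mul, ← circ_add, neg_add_cancel, circ_zero,
        map_one]
    rw [smul_neg, hneg, hneg, ha, smul_smul, ha]

theorem map_circ_apply_eq (hs : ∀ x y, s (B.circ (B.ι x)) = s (B.circ (B.ι y))) {σ : A →+ A}
    (hσ : ∀ x, ∃ y, σ (B.ι x) = B.ι y) (a : A) : s (B.circ (σ a)) = s (B.circ a) := by
  let ψ : A →+ Additive M :=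
    { toFun a := .ofMul (s (B.circ a))
      map_zero' := by rw [circ_zero, map_one, ofMul_one]
      map_add' a b := by rw [circ_add, map_mul, B.map_circ_smul hs, mul_comm, ofMul_mul] }
  have hψ : ψ.comp σ = ψ := AddMonoidHom.eq_of_eqOn_dense B.closure_range_ι <| by
    rintro _ ⟨x, rfl⟩
    obtain ⟨y, hy⟩ := hσ x
    change Additive.ofMul (s (B.circ (σ (B.ι x)))) = Additive.ofMul (s (B.circ (B.ι x)))
    rw [hy, hs]
  exact congrArg Additive.toMul (DFunLike.congr_fun hψ a)

end ConstantHomomorphisms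

theorem map_circ_ι_eq {p : ℕ} [Fact p.Prime] {G A X : Type*} [Group G] [AddCommGroup A]
    [DistribMulAction G A] [MulAction G X] (B : CycleBase G A X)
    {s : G →* Multiplicative (ZMod p)} {E : ZMod p → A}
    (hE : ∀ g i, g • E i = E (i + (s g).toAdd)) (hι : ∀ x, ∃ i, B.ι x = E i) (x y : X) :
    s (B.circ (B.ι x)) = s (B.circ (B.ι y)) := by
  obtain ⟨i, hi⟩ := hι x
  obtain ⟨j, hj⟩ := hι y
  rw [hi, hj]
  refine Multiplicative.toAdd.injective (apply_eq_of_shift_identity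
    (G := fun i _ => (s (B.circ (E i))).toAdd) (fun i j _ _ => ?_) i j 0)
  have h := congrArg s (B.circ_smul_mul_circ (E i) (E j))
  rw [map_mul, map_mul, hE, hE] at h
  exact congrArg Multiplicative.toAdd h

section

variable {p k l : ℕ} {e : ℤ} {G A X : Type*} [Group G] [AddCommGroup A] [DistribMulAction G A]
  [MulAction G X] (B : CycleBase G A X) (D : IsPrimarySplitting A p k l e)

theorem smul_primaryPart_ι_eq_of_ncard_eq [Fact p.Prime] [Finite A] [Finite X]
    [IsPretransitive G X] {r : ℕ} (hX : Nat.card X = p ^ r)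
    (hp : (Set.range (B.primaryPart D).ι).ncard = p) {q : G} (hq : q ∈ B.torsionSubgroup l)
    (x : X) : q • (B.primaryPart D).ι x = (B.primaryPart D).ι x := by
  set B' := B.primaryPart D
  have : Finite G := Finite.of_equiv _ B.circ
  have hrange := range_eq_orbit (B.smul_primaryPart_ι D · · |>.symm) x
  have hmem : ∀ x', B'.ι x' ∈ orbit G (B'.ι x) := fun x' => hrange ▸ Set.mem_range_self x'
  have hY : Nat.card (orbit G (B'.ι x)) = p := by
    rw [← hp, hrange, Nat.card_coe_set_eq]
  have := B.isPretransitive_torsionSubgroup D hX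
  have htrans : ∀ x y, ∃ g ∈ B.torsionSubgroup k, g • B'.ι x = B'.ι y := fun x y => by
    obtain ⟨g, rfl⟩ := exists_smul_eq (B.torsionSubgroup k) x y
    exact ⟨g, g.2, B.smul_primaryPart_ι D g x⟩
  have : IsPretransitive (B.torsionSubgroup k) (orbit G (B'.ι x)) := ⟨fun y z => by
    obtain ⟨u, hu⟩ := hrange.ge y.2
    obtain ⟨v, hv⟩ := hrange.ge z.2
    obtain ⟨g, hg, hguv⟩ := htrans u v
    exact ⟨⟨g, hg⟩, Subtype.ext (by rw [← hv, ← hguv, hu]; rfl)⟩⟩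
  obtain ⟨s, E, hE⟩ := exists_zmod_equiv_of_card_eq (B.isPGroup_torsionSubgroup D) hY
  have hs := B'.map_circ_ι_eq (s := s) (E := fun i => (E i).1)
    (fun g i => congrArg Subtype.val (hE g i))
    fun x' => ⟨E.symm ⟨_, hmem x'⟩, by rw [Equiv.apply_symm_apply]⟩
  have hact : ∀ (h : G) (a : torsionBy A (k : ℤ)) (x' : X),
      B'.circ (h • a) • B'.ι x' = B'.circ a • B'.ι x' := fun h a x' => by
    have hsa : s (B'.circ (h • a)) = s (B'.circ a) :=
      B'.map_circ_apply_eq hs (σ := DistribSMul.toAddMonoidHom _ h)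
        (fun x => ⟨h • x, B.smul_primaryPart_ι D h x⟩) a
    obtain ⟨i, hi⟩ := E.surjective ⟨_, hmem x'⟩
    refine congrArg Subtype.val
      (show B'.circ (h • a) • (⟨_, hmem x'⟩ : orbit G (B'.ι x)) = B'.circ a • ⟨_, hmem x'⟩ from ?_)
    rw [← hi, hE, hE, hsa]
  refine smul_apply_eq_of_forall_exists_smul_smul_eq (P := B.torsionSubgroup k)
    (N := B.torsionSubgroup l) (f := B'.ι) (B.smul_primaryPart_ι D · · |>.symm) htrans
    (fun g hg h hh => ?_) ?_ hq x
  · obtain ⟨a, rfl⟩ := B.circ.surjective g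
    obtain ⟨b, rfl⟩ := B.circ.surjective h
    rw [circ_mem_torsionSubgroup] at hg hh
    refine ⟨B.circ (B.circ a • b), B.circ_mem_torsionSubgroup.mpr (smul_mem_torsionBy _ hh),
      fun y => ?_⟩
    rw [smul_smul, B.circ_smul_mul_circ, mul_smul, B.smul_primaryPart_ι D (B.circ b)]
    exact hact (B.circ b) ⟨a, hg⟩ _
  · rw [B.card_torsionSubgroup_right D, hX]
    exact (D.coprime.pow_left r).symm

theorem primaryPart_ι_injective [Fact p.Prime] [Finite A] [Finite X] [FaithfulSMul G X]
    [IsPretransitive G X] (hX : Nat.card X = p ^ 2) (hι : Function.Injective B.ι) :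
    Function.Injective (B.primaryPart D).ι := by
  have hp := Fact.out (p := p.Prime)
  have hfiber := ncard_range_mul_ncard_fiber (B.smul_primaryPart_ι D · · |>.symm)
  rw [hX] at hfiber
  obtain ⟨x₀⟩ : Nonempty X := (Nat.card_pos_iff.mp (hX ▸ pow_pos hp.pos 2)).1
  obtain ⟨c, hc, hcard⟩ := (Nat.dvd_prime_pow hp).mp (Dvd.intro _ (hfiber x₀))
  obtain hc | rfl | rfl : c = 0 ∨ c = 1 ∨ c = 2 := by lia
  · rw [hc, pow_zero, Set.ncard_eq_one] at hcard
    obtain ⟨a, ha⟩ := hcard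
    have hconst : ∀ x, (B.primaryPart D).ι x = a := fun x => ha.le (Set.mem_range_self x)
    refine B.primaryPart_ι_injective_of_forall_smul_eq D hι hX fun q _ x => ?_
    rw [smul_primaryPart_ι, hconst, hconst]
  · rw [pow_one] at hcard
    exact B.primaryPart_ι_injective_of_forall_smul_eq D hι hX fun q hq =>
      B.smul_primaryPart_ι_eq_of_ncard_eq D hX hcard hq
  · intro x y hxy
    have hone := (mul_eq_left₀ (pow_pos hp.pos 2).ne').mp (hcard ▸ hfiber y)
    exact (Set.ncard_le_one_iff (Set.toFinite _)).mp hone.le hxy rfl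

end

open Pointwise

namespace IsNormalForm

variable {p : ℕ} [Fact p.Prime] {G A X : Type*} [Group G] [AddCommGroup A] [DistribMulAction G A]
  [MulAction G X] {B : CycleBase G A X} {n : A} {E : ZMod p × ZMod p ≃ X} {Φ : ZMod p → ZMod p}
  (h : B.IsNormalForm n E Φ)
include h

theorem circ_ι_smul_eq_op (u v : ZMod p × ZMod p) :
    B.circ (B.ι (E u)) • E v = E ((CycleSet.ofParams h.isAdmissible).op u v) := by
  rw [h.circ_ι_smul, CycleSet.ofParams_op]
  simp only [one_mul]

theorem circ_pow_smul (j : ℕ) (b y : ZMod p) : B.circ n ^ j • E (b, y) = E (b + j, y) := by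
  induction j with
  | zero => rw [pow_zero, one_smul, Nat.cast_zero, add_zero]
  | succ j ih => rw [pow_succ', mul_smul, ih, h.circ_smul, Nat.cast_succ, add_assoc]

theorem ne_zero : n ≠ 0 := fun hn => by
  have h₁ := h.circ_smul 0 0
  rw [hn, circ_zero, one_smul, E.apply_eq_iff_eq, Prod.mk.injEq] at h₁
  exact one_ne_zero (add_eq_left.mp h₁.1.symm)

variable [FaithfulSMul G X]

theorem ι_add (b y : ZMod p) : B.ι (E (b, y)) + n = B.ι (E (b, y + 1)) :=
  B.ext_of_smul_eq E fun c v => by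
    rw [circ_add, h.smul_eq, mul_smul, h.circ_ι_smul, h.circ_smul, h.circ_ι_smul, add_assoc]

theorem ι_add_nsmul (b y : ZMod p) (j : ℕ) : B.ι (E (b, y)) + j • n = B.ι (E (b, y + j)) := by
  induction j with
  | zero => rw [zero_nsmul, add_zero, Nat.cast_zero, add_zero]
  | succ j ih => rw [succ_nsmul, ← add_assoc, ih, h.ι_add, Nat.cast_succ, add_assoc]

theorem eq_nsmul {a : A} {μ : ZMod p} (ha : ∀ b y, B.circ a • E (b, y) = E (b + μ, y)) :
    a = μ.val • n :=
  B.ext_of_smul_eq E fun b y => by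
    rw [ha, B.circ_nsmul h.smul_eq, h.circ_pow_smul, ZMod.natCast_zmod_val]

theorem exists_eq_nsmul (hp : p ≠ 2) {m : A} (hm : ∀ (g : G) x, ∃ y, B.ι x + g • m = B.ι y) :
    ∃ μ : ZMod p, m = μ.val • n := by
  obtain ⟨μ, hμ⟩ := CycleSet.exists_translation_of_forall_exists_op h.isAdmissible hp
    (g := fun v => E.symm (B.circ m • E v)) fun u => by
      obtain ⟨y, hy⟩ := hm (B.circ (B.ι (E u)))⁻¹ (E u)
      refine ⟨E.symm y, fun v => E.injective ?_⟩
      rw [Equiv.apply_symm_apply, ← h.circ_ι_smul_eq_op, ← h.circ_ι_smul_eq_op, smul_smul,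
        circ_mul_circ, hy, Equiv.apply_symm_apply]
  exact ⟨μ, h.eq_nsmul fun b y => (Equiv.symm_apply_eq E).mp (hμ b y)⟩

end IsNormalForm

section Splitting

variable {p k l : ℕ} {e : ℤ} {G A X : Type*} [Group G] [AddCommGroup A]
  [DistribMulAction G A] [MulAction G X] {B : CycleBase G A X}
  {D : IsPrimarySplitting A p k l e} {n : AddSubgroup.torsionBy A (k : ℤ)}
  {E : ZMod p × ZMod p ≃ X} {Φ : ZMod p → ZMod p}

/-- The vertical line through `x` in the coordinates `E`. -/
def vline (E : ZMod p × ZMod p ≃ X) (x : X) : Set X :=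
  Set.range fun z => E ((E.symm x).1, z)

theorem vline_apply (E : ZMod p × ZMod p ≃ X) (b y : ZMod p) :
    vline E (E (b, y)) = Set.range fun z => E (b, z) := by
  rw [vline, Equiv.symm_apply_apply]

theorem exists_circ_nsmul_eq [Finite G] (h : (B.primaryPart D).IsNormalForm n E Φ) {g : G}
    (hg : g ∈ Subgroup.zpowers (B.circ (n : A))) : ∃ j : ℕ, B.circ (j • (n : A)) = g := by
  obtain ⟨j, rfl⟩ := mem_powers_iff_mem_zpowers.mpr hg
  exact ⟨j, congrArg Subtype.val ((B.primaryPart D).circ_nsmul h.smul_eq j)⟩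

theorem smul_circ_symm_eq [Finite G] (h : (B.primaryPart D).IsNormalForm n E Φ) {q g : G}
    (hqn : q • n = n) (hg : g ∈ Subgroup.zpowers (B.circ (n : A))) :
    q • B.circ.symm g = B.circ.symm g := by
  obtain ⟨j, rfl⟩ := exists_circ_nsmul_eq h hg
  rw [Equiv.symm_apply_apply, smul_comm]
  exact congrArg (j • ·) (congrArg Subtype.val hqn)

variable [Fact p.Prime] [FaithfulSMul G X]

theorem exists_smul_eq_nsmul (h : (B.primaryPart D).IsNormalForm n E Φ) (hp : p ≠ 2) (g : G) :
    ∃ μ : ZMod p, g • n = μ.val • n := by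
  refine h.exists_eq_nsmul hp fun q x => ?_
  let g' := (q : G) * g
  let u := E.symm (g'⁻¹ • x)
  refine ⟨g' • E (u.1, u.2 + 1), ?_⟩
  rw [← smul_primaryPart_ι, ← h.ι_add, Prod.mk.eta, Equiv.apply_symm_apply, smul_add,
    smul_primaryPart_ι, smul_inv_smul]
  exact congrArg _ (mul_smul (q : G) g n).symm

theorem smul_apply_eq (h : (B.primaryPart D).IsNormalForm n E Φ)
    (hι : Function.Injective (B.primaryPart D).ι) {g : G} {μ : ZMod p} (hg : g • n = μ.val • n)
    (b y : ZMod p) : g • E (b, y) =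
      E ((E.symm (g • E (b, 0))).1, (E.symm (g • E (b, 0))).2 + y * μ) := by
  apply hι
  rw [← smul_primaryPart_ι]
  have hy : (B.primaryPart D).ι (E (b, y)) = (B.primaryPart D).ι (E (b, 0)) + y.val • n := by
    rw [h.ι_add_nsmul, zero_add, ZMod.natCast_zmod_val]
  rw [hy, smul_add, smul_comm, hg, smul_smul, smul_primaryPart_ι,
    ← E.apply_symm_apply (g • E (b, 0)), ← Prod.mk.eta (p := E.symm _), h.ι_add_nsmul]
  simp

theorem vline_smul (h : (B.primaryPart D).IsNormalForm n E Φ) (hp : p ≠ 2)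
    (hι : Function.Injective (B.primaryPart D).ι) (g : G) (x : X) :
    vline E (g • x) = g • vline E x := by
  obtain ⟨⟨b, y⟩, rfl⟩ := E.surjective x
  obtain ⟨μ, hμ⟩ := exists_smul_eq_nsmul h hp g
  have hμ₀ : μ ≠ 0 := fun h₀ => h.ne_zero <| by
    rwa [h₀, ZMod.val_zero, zero_nsmul, smul_eq_zero_iff_eq] at hμ
  have hsurj : Function.Surjective fun z => (E.symm (g • E (b, 0))).2 + z * μ :=
    ((Equiv.mulRight₀ μ hμ₀).trans (Equiv.addLeft _)).surjective
  rw [smul_apply_eq h hι hμ b y, vline_apply, vline_apply, ← Set.image_smul, ← Set.range_comp,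
    ← hsurj.range_comp fun z => E (_, z)]
  exact congrArg Set.range (funext fun z => (smul_apply_eq h hι hμ b z).symm)

theorem smul_vline_eq_of_smul_eq [Finite A] [Finite X] [IsPretransitive G X]
    (h : (B.primaryPart D).IsNormalForm n E Φ) (hp : p ≠ 2)
    (hι : Function.Injective (B.primaryPart D).ι) {q : G} (hq : q ∈ B.torsionSubgroup l)
    (hqn : q • n = n) (x : X) : q • vline E x = vline E x := by
  have : Finite G := Finite.of_equiv _ B.circ
  have hpow : ∀ (j : ℕ) b y, B.circ (n : A) ^ j • E (b, y) = E (b + j, y) := h.circ_pow_smul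
  refine B.smul_apply_eq_of_forall_smul_circ_symm_eq (vline_smul h hp hι)
    (P := Subgroup.zpowers (B.circ (n : A))) (k := l) (fun x x' => ?_) (fun g hg g' hg' => ?_) ?_
    hq (fun g => smul_circ_symm_eq h hqn) x
  · obtain ⟨⟨c, y⟩, rfl⟩ := E.surjective x
    obtain ⟨⟨c', y'⟩, rfl⟩ := E.surjective x'
    refine ⟨B.circ (n : A) ^ (c' - c).val, pow_mem (Subgroup.mem_zpowers _) _, ?_⟩
    rw [← vline_smul h hp hι, hpow, ZMod.natCast_zmod_val, add_sub_cancel, vline_apply,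
      vline_apply]
  · obtain ⟨j, rfl⟩ := exists_circ_nsmul_eq h hg
    have hgn := h.smul_eq ⟨_, B.circ_mem_torsionSubgroup.mpr (nsmul_mem n.2 j)⟩
    rwa [smul_circ_symm_eq h hgn hg', Equiv.apply_symm_apply]
  · rw [B.card_torsionSubgroup_right D, ← Nat.card_congr E, Nat.card_prod, Nat.card_zmod]
    exact (D.coprime.mul_left D.coprime).symm

theorem eq_one_of_smul_eq [Finite A] [Finite X] [IsPretransitive G X]
    (h : (B.primaryPart D).IsNormalForm n E Φ) (hp : p ≠ 2)
    (hι : Function.Injective (B.primaryPart D).ι) {q : G} (hq : q ∈ B.torsionSubgroup l)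
    (hqn : q • n = n) : q = 1 := by
  have hX : Nat.card X = p ^ 2 := by
    rw [← Nat.card_congr E, Nat.card_prod, Nat.card_zmod, sq]
  refine B.eq_one_of_forall_smul_primaryPart_ι D hX hq fun x => ?_
  obtain ⟨⟨b, y⟩, rfl⟩ := E.surjective x
  obtain ⟨j, hj⟩ : ∃ j : ℕ, q • (B.primaryPart D).ι (E (b, y)) =
      (B.primaryPart D).ι (E (b, y)) + j • n := by
    obtain ⟨z, hz⟩ : q • E (b, y) ∈ Set.range fun z => E (b, z) := by
      rw [← vline_apply E b y, ← smul_vline_eq_of_smul_eq h hp hι hq hqn, vline_apply]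
      exact Set.smul_mem_smul_set (Set.mem_range_self y)
    refine ⟨(z - y).val, ?_⟩
    rw [smul_primaryPart_ι, ← hz, h.ι_add_nsmul, ZMod.natCast_zmod_val, add_sub_cancel]
  have hpow : ∀ i : ℕ, q ^ i • (B.primaryPart D).ι (E (b, y)) =
      (B.primaryPart D).ι (E (b, y)) + i • j • n := fun i => by
    induction i with
    | zero => rw [pow_zero, one_smul, zero_nsmul, add_zero]
    | succ i ih =>
      rw [pow_succ', mul_smul, ih, smul_add, hj, smul_comm, smul_comm q j n, hqn, add_assoc,
        succ_nsmul']
  have hjn : j • n = 0 := by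
    have hql : q ^ l = 1 := orderOf_dvd_iff_pow_eq_one.mp
      (B.card_torsionSubgroup_right D ▸ Subgroup.orderOf_dvd_natCard _ hq)
    have hl := hpow l
    rw [hql, one_smul, left_eq_add] at hl
    refine Subtype.ext (D.eq_zero (j • n).2 ?_)
    rw [Submodule.mem_toAddSubgroup, Submodule.mem_torsionBy_iff, natCast_zsmul]
    exact congrArg Subtype.val hl
  rw [hj, hjn, add_zero]

end Splitting

end CycleBase

theorem smul_eq_of_isPGroup_of_ncard_range_lt {G X Z : Type*} [Group G] [MulAction G X]
    [MulAction G Z] [Finite X] {r : ℕ} [Fact r.Prime] (hG : IsPGroup r G) {f : X → Z}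
    (hf : ∀ (g : G) x, f (g • x) = g • f x) (hrange : (Set.range f).ncard < r)
    (hfiber : ∀ x, {y | f y = f x}.ncard < r) (g : G) (x : X) : g • x = x := by
  have hfg : ∀ (g : G) x, f (g • x) = f x := fun g x => by
    rw [hf]
    refine smul_eq_of_isPGroup_of_ncard_lt hG (Set.finite_range f) ?_ hrange g ⟨x, rfl⟩
    rintro g _ ⟨y, rfl⟩
    exact ⟨g • y, hf g y⟩
  refine smul_eq_of_isPGroup_of_ncard_lt hG (Set.toFinite {y | f y = f x}) (fun g y hy => ?_)
    (hfiber x) g rfl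
  rw [Set.mem_ofPred_eq, hfg, hy]

namespace CycleBase

open AddSubgroup MulAction

section ComplementaryComponent

variable {p k l : ℕ} {e : ℤ} {G A X : Type*} [Group G] [AddCommGroup A] [DistribMulAction G A]
  [MulAction G X] (B : CycleBase G A X)

include B in
theorem dvd_three [Finite X] [FaithfulSMul G X] (D : IsPrimarySplitting A 2 k l e)
    (hX : Nat.card X = 2 ^ 2) : l ∣ 3 := by
  have hl : l ∣ Nat.card G := Dvd.intro_left k (by rw [← D.card_eq, Nat.card_congr B.circ])
  have hG : Nat.card G ∣ (Nat.card X).factorial :=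
    Nat.card_perm (α := X) ▸ Subgroup.card_dvd_of_injective (toPermHom G X) toPerm_injective
  rw [hX, show Nat.factorial (2 ^ 2) = 2 ^ 3 * 3 from rfl] at hG
  exact ((D.coprime.pow_left 3).symm).dvd_of_dvd_mul_left (hl.trans hG)

variable [Finite A] (D : IsPrimarySplitting A p k l e)

include D in
theorem ncard_range_coι_le : (Set.range (B.coι e)).ncard ≤ l := by
  rw [← D.card_torsionBy_right, ← SetLike.coe_sort_coe, Nat.card_coe_set_eq]
  refine Set.ncard_le_ncard ?_ (Set.toFinite _)
  rintro _ ⟨x, rfl⟩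
  exact D.sub_zsmul_mem _

variable [Finite X] [IsPretransitive G X]

theorem coι_eq_of_eq_three [FaithfulSMul G X] (D : IsPrimarySplitting A 2 k 3 e)
    (hX : Nat.card X = 2 ^ 2) (x y : X) : B.coι e x = B.coι e y := by
  have hfiber := ncard_range_mul_ncard_fiber (B.smul_coι (e := e) · · |>.symm)
  rw [hX] at hfiber
  have hle := B.ncard_range_coι_le D
  obtain ⟨c, hc, hcard⟩ := (Nat.dvd_prime_pow Nat.prime_two).mp (Dvd.intro _ (hfiber x))
  obtain hc | hc | hc : c = 0 ∨ c = 1 ∨ c = 2 := by lia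
  · rw [hc, pow_zero] at hcard
    exact (Set.ncard_le_one_iff (Set.toFinite _)).mp hcard.le ⟨x, rfl⟩ ⟨y, rfl⟩
  · rw [hc, pow_one] at hcard
    have hH := B.card_torsionSubgroup_right D
    have htriv : ∀ (q : B.torsionSubgroup 3) (x : X), q • x = x :=
      smul_eq_of_isPGroup_of_ncard_range_lt (r := 3)
        (IsPGroup.of_card (n := 1) hH) (f := B.coι e) (fun q x => (B.smul_coι (q : G) x).symm)
        (by lia) fun x => by have := hfiber x; rw [hcard] at this; lia
    have hone : Nat.card (B.torsionSubgroup 3) = 1 := Nat.card_eq_one_iff_unique.mpr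
      ⟨⟨fun q q' => eq_of_smul_eq_smul fun x : X => by rw [htriv, htriv]⟩, ⟨1⟩⟩
    lia
  · rw [hc] at hcard
    lia

variable [Fact p.Prime]

include D in
theorem coι_eq_of_lt {r : ℕ} (hX : Nat.card X = p ^ r) (hl : l < p) (x y : X) :
    B.coι e x = B.coι e y := by
  have hdvd : (Set.range (B.coι e)).ncard ∣ p ^ r :=
    hX ▸ Dvd.intro _ (ncard_range_mul_ncard_fiber (B.smul_coι · · |>.symm) x)
  obtain ⟨c, -, hc⟩ := (Nat.dvd_prime_pow Fact.out).mp hdvd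
  have hlt : p ^ c < p ^ 1 := by
    rw [← hc, pow_one]
    exact (B.ncard_range_coι_le D).trans_lt hl
  rw [Nat.pow_lt_pow_iff_right (Fact.out : p.Prime).one_lt, Nat.lt_one_iff] at hlt
  rw [hlt, pow_zero] at hc
  exact (Set.ncard_le_one_iff (Set.toFinite _)).mp hc.le ⟨x, rfl⟩ ⟨y, rfl⟩

variable [FaithfulSMul G X]
include D

theorem lt_of_ne_two (hX : Nat.card X = p ^ 2) (hι : Function.Injective B.ι) (hp : p ≠ 2) :
    l < p := by
  have : Finite G := Finite.of_equiv _ B.circ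
  have := B.isPretransitive_torsionSubgroup D hX
  have hιp := B.primaryPart_ι_injective D hX hι
  obtain ⟨n, E, Φ, h⟩ := (B.primaryPart D).exists_isNormalForm
    (B.isPGroup_torsionSubgroup D) hX hιp
  choose μ hμ using fun q : B.torsionSubgroup l => exists_smul_eq_nsmul h hp (q : G)
  have hμ_inj : Function.Injective μ := fun q q' hqq' => by
    have hn : ((q⁻¹ * q' : B.torsionSubgroup l) : G) • n = n := by
      rw [Subgroup.coe_mul, Subgroup.coe_inv, mul_smul, hμ q', ← hqq', ← hμ q, inv_smul_smul]
    exact inv_mul_eq_one.mp (Subtype.ext (eq_one_of_smul_eq h hp hιp (q⁻¹ * q').2 hn))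
  have hμ_zero : 0 ∉ Set.range μ := by
    rintro ⟨q, hq⟩
    have hqn := hμ q
    rw [hq, ZMod.val_zero, zero_nsmul, smul_eq_zero_iff_eq] at hqn
    exact h.ne_zero hqn
  calc l = (Set.range μ).ncard := by
        rw [Set.ncard_range_of_injective hμ_inj, B.card_torsionSubgroup_right D]
    _ < Nat.card (ZMod p) := Set.ncard_lt_card fun hu => hμ_zero (hu ▸ Set.mem_univ 0)
    _ = p := Nat.card_zmod p

theorem coι_eq (hX : Nat.card X = p ^ 2) (hι : Function.Injective B.ι) (x y : X) :
    B.coι e x = B.coι e y := by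
  obtain rfl | hp := eq_or_ne p 2
  · obtain rfl | rfl := (Nat.dvd_prime Nat.prime_three).mp (B.dvd_three D hX)
    · exact B.coι_eq_of_lt D hX one_lt_two x y
    · exact B.coι_eq_of_eq_three D hX x y
  · exact B.coι_eq_of_lt D hX (B.lt_of_ne_two D hX hι hp) x y

end ComplementaryComponent

section Twist

variable {p k l : ℕ} {e : ℤ} {G A X : Type*} [Group G] [AddCommGroup A] [DistribMulAction G A]
  [MulAction G X] {B : CycleBase G A X} {D : IsPrimarySplitting A p k l e} {q : A}

theorem circ_ι_eq_mul (hq : ∀ x, B.coι e x = q) (x : X) :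
    B.circ (B.ι x) = B.circ q * B.circ ((B.primaryPart D).ι x) := by
  have hfix : ∀ g : G, g • q = q := fun g => by
    rw [← hq x, smul_coι, hq, hq]
  rw [← hfix (B.circ ((B.primaryPart D).ι x)), ← circ_add, ← hq x]
  exact congrArg B.circ (add_sub_cancel _ _).symm

theorem circ_mul_circ_primaryPart_ι (hq : ∀ x, B.coι e x = q) (x : X) :
    B.circ q * B.circ ((B.primaryPart D).ι x) =
      B.circ ((B.primaryPart D).ι (B.circ q • x)) * B.circ q := by
  rw [← smul_primaryPart_ι]
  refine B.circ_mul_circ_of_smul_eq ?_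
  rw [← hq x, smul_coι, hq, hq]

variable [Fact p.Prime] {n : torsionBy A (k : ℤ)} {E : ZMod p × ZMod p ≃ X} {Φ : ZMod p → ZMod p}

theorem exists_circ_smul_eq (h : (B.primaryPart D).IsNormalForm n E Φ)
    (hq : ∀ x, B.coι e x = q) :
    ∃ μ c : ZMod p, μ ≠ 0 ∧ (∀ a x, B.circ q • E (a, x) = E (μ * a + c, μ * x)) ∧
      ∀ t, Φ (μ * t) = μ * Φ t := by
  have hf : (CycleSet.ofParams h.isAdmissible).IsIso (CycleSet.ofParams h.isAdmissible)
      (fun v => E.symm (B.circ q • E v)) := by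
    refine ⟨((E.trans (MulAction.toPerm (B.circ q))).trans E.symm).bijective,
      fun u v => E.injective ?_⟩
    rw [← h.circ_ι_smul_eq_op, Equiv.apply_symm_apply, Equiv.apply_symm_apply,
      Equiv.apply_symm_apply, ← h.circ_ι_smul_eq_op]
    have hmul := congrArg (· • E v) (circ_mul_circ_primaryPart_ι (D := D) hq (E u))
    simp only [mul_smul] at hmul
    exact hmul
  obtain ⟨-, μ, c, hμ, hE, hΦ⟩ := hf.eq_and_exists_affine
  exact ⟨μ, c, hμ, fun a x => (Equiv.symm_apply_eq E).mp (hE a x), hΦ⟩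

theorem exists_mul_add_eq [FaithfulSMul G X] (h : (B.primaryPart D).IsNormalForm n E Φ)
    (hq : ∀ x, B.coι e x = q) {μ c : ZMod p}
    (hE : ∀ a x, B.circ q • E (a, x) = E (μ * a + c, μ * x)) : ∃ d, μ * d + c = d := by
  obtain rfl | hμ := eq_or_ne μ 1
  · have hqn : q = ((c.val • n : torsionBy A (k : ℤ)) : A) := B.ext_of_smul_eq E fun b y => by
      have hn := h.circ_pow_smul c.val b y
      rw [← (B.primaryPart D).circ_nsmul h.smul_eq, ZMod.natCast_zmod_val] at hn
      rw [hE, one_mul, one_mul, ← hn]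
      rfl
    have hq₀ : q = 0 := D.eq_zero (hqn ▸ (c.val • n).2) (hq (E (0, 0)) ▸ D.sub_zsmul_mem _)
    have h₀ := hE 0 0
    rw [hq₀, circ_zero, one_smul, E.apply_eq_iff_eq, Prod.mk.injEq] at h₀
    exact ⟨0, h₀.1.symm⟩
  · refine ⟨c / (1 - μ), ?_⟩
    field_simp [sub_ne_zero.mpr hμ.symm]
    ring

end Twist

theorem exists_eq_ofParams {p : ℕ} [Fact p.Prime] {G A X : Type*} [Group G] [AddCommGroup A]
    [DistribMulAction G A] [MulAction G X] [Finite A] [Finite X] [FaithfulSMul G X]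
    [IsPretransitive G X] (B : CycleBase G A X) (hX : Nat.card X = p ^ 2)
    (hι : Function.Injective B.ι) :
    ∃ (Φ : ZMod p → ZMod p) (α : ZMod p) (h : CycleSet.IsAdmissible Φ α)
      (E : ZMod p × ZMod p ≃ X),
      ∀ u v, B.circ (B.ι (E u)) • E v = E ((CycleSet.ofParams h).op u v) := by
  have : Finite G := Finite.of_equiv _ B.circ
  obtain ⟨k, l, e, D⟩ := exists_isPrimarySplitting A (Fact.out : p.Prime)
  have := B.isPretransitive_torsionSubgroup D hX
  obtain ⟨n, E, Φ, h⟩ := (B.primaryPart D).exists_isNormalForm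
    (B.isPGroup_torsionSubgroup D) hX (B.primaryPart_ι_injective D hX hι)
  have hq := fun x => B.coι_eq D hX hι x (E (0, 0))
  obtain ⟨μ, c, hμ, hE, hΦ⟩ := exists_circ_smul_eq h hq
  obtain ⟨d, hd⟩ := exists_mul_add_eq h hq hE
  refine ⟨Φ, μ, ⟨h.isAdmissible.nonconst, h.isAdmissible.even, hμ, hΦ⟩,
    ((Equiv.addRight d).prodCongr (Equiv.refl _)).trans E, fun u v => ?_⟩
  obtain ⟨a, x⟩ := u
  obtain ⟨b, y⟩ := v
  have hE' : ∀ b y, ((Equiv.addRight d).prodCongr (Equiv.refl (ZMod p))).trans E (b, y) =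
      E (b + d, y) := fun _ _ => rfl
  have hιp : B.circ ((B.primaryPart D).ι (E (a + d, x))) • E (b + d, y) = _ :=
    h.circ_ι_smul _ _ _ _
  rw [CycleSet.ofParams_op, hE', hE', hE', circ_ι_eq_mul (D := D) hq, mul_smul, hιp, hE,
    add_sub_add_right_eq_sub, mul_add, mul_add, mul_add]
  congr 2
  linear_combination hd

end CycleBase

namespace CycleSet

theorem exists_iso_ofParams {p : ℕ} [Fact p.Prime] {X : Type*} (C : CycleSet X)
    (hX : Nat.card X = p ^ 2) (hC : C.Indecomposable) (hC' : C.Irretractable) :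
    ∃ (Φ : ZMod p → ZMod p) (α : ZMod p) (h : IsAdmissible Φ α), C.Iso (ofParams h) := by
  have hp : 0 < p ^ 2 := pow_pos (Fact.out : p.Prime).pos 2
  have : Finite X := (Nat.card_pos_iff.mp (hX ▸ hp)).2
  have : Finite C.permGroup := Subtype.finite
  have : Finite C.evalCon.Quotient := Finite.of_equiv _ C.evalEquiv.symm
  have : MulAction.IsPretransitive C.permGroup X := ⟨fun x y => by
    obtain ⟨g, hg, hxy⟩ := hC x y
    exact ⟨⟨g, hg⟩, hxy⟩⟩
  obtain ⟨Φ, α, h, E, hE⟩ := C.cycleBase.exists_eq_ofParams hX (C.cycleBase_ι_injective hC')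
  refine ⟨Φ, α, h, E.symm, E.symm.bijective, fun u v => ?_⟩
  have := hE (E.symm u) (E.symm v)
  rw [cycleBase_circ_ι, permSigma_smul, E.apply_symm_apply, E.apply_symm_apply] at this
  rw [this, E.symm_apply_apply]

end CycleSet

theorem stmt18 {p : ℕ} (hp : p.Prime) :
    (∀ (Φ : ZMod p → ZMod p) (α : ZMod p),
      (∃ i j : ZMod p, Φ i ≠ Φ j) → (∀ A : ZMod p, Φ (-A) = Φ A) →
      α ≠ 0 → (∀ A : ZMod p, Φ (α * A) = α * Φ A) →
      ∃ C : CycleSet (ZMod p × ZMod p),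
        (∀ a b x y : ZMod p,
          C.op (a, x) (b, y) = (α * b + α * x, α * y + α * Φ (b - a))) ∧
        C.Indecomposable ∧ C.Irretractable) ∧
    (∀ (Φ Φ' : ZMod p → ZMod p) (α α' : ZMod p),
      (∃ i j : ZMod p, Φ i ≠ Φ j) → (∀ A : ZMod p, Φ (-A) = Φ A) →
      α ≠ 0 → (∀ A : ZMod p, Φ (α * A) = α * Φ A) →
      (∃ i j : ZMod p, Φ' i ≠ Φ' j) → (∀ A : ZMod p, Φ' (-A) = Φ' A) →
      α' ≠ 0 → (∀ A : ZMod p, Φ' (α' * A) = α' * Φ' A) →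
      ∀ (C D : CycleSet (ZMod p × ZMod p)),
        (∀ a b x y : ZMod p,
          C.op (a, x) (b, y) = (α * b + α * x, α * y + α * Φ (b - a))) →
        (∀ a b x y : ZMod p,
          D.op (a, x) (b, y) = (α' * b + α' * x, α' * y + α' * Φ' (b - a))) →
        (C.Iso D ↔ α = α' ∧ ∃ β : ZMod p, β ≠ 0 ∧
          ∀ A : ZMod p, β⁻¹ * Φ (β * A) = Φ' A)) ∧
    (∀ (X : Type) (C : CycleSet X), Nat.card X = p ^ 2 →
      C.Indecomposable → C.Irretractable →
      ∃ (Φ : ZMod p → ZMod p) (α : ZMod p),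
        (∃ i j : ZMod p, Φ i ≠ Φ j) ∧ (∀ A : ZMod p, Φ (-A) = Φ A) ∧
        α ≠ 0 ∧ (∀ A : ZMod p, Φ (α * A) = α * Φ A) ∧
        ∃ D : CycleSet (ZMod p × ZMod p),
          (∀ a b x y : ZMod p,
            D.op (a, x) (b, y) = (α * b + α * x, α * y + α * Φ (b - a))) ∧
          C.Iso D) := by
  have : Fact p.Prime := ⟨hp⟩
  refine ⟨fun Φ α hnc hev hα hmul => ?_, fun Φ Φ' α α' hnc hev hα hmul hnc' hev' hα' hmul' C D
    hC hD => ?_, fun X C hX hind hirr => ?_⟩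
  · let h : CycleSet.IsAdmissible Φ α := ⟨hnc, hev, hα, hmul⟩
    exact ⟨.ofParams h, CycleSet.ofParams_op h, CycleSet.indecomposable_ofParams h,
      CycleSet.irretractable_ofParams h⟩
  · rw [CycleSet.eq_ofParams ⟨hnc, hev, hα, hmul⟩ hC,
      CycleSet.eq_ofParams ⟨hnc', hev', hα', hmul'⟩ hD]
    exact CycleSet.iso_ofParams_iff _ _
  · obtain ⟨Φ, α, h, hiso⟩ := C.exists_iso_ofParams hX hind hirr
    exact ⟨Φ, α, h.nonconst, h.even, h.ne_zero, h.map_mul, .ofParams h,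
      CycleSet.ofParams_op h, hiso⟩
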